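/- arXiv:2209.03852 — 2 statements merged into one kernel-verified Lean document; each statement's English description precedes it below -/
import Mathlib

section
/- Let H²_β be a weighted Hardy space of polynomial growth. Then for every φ ∈ Aut(𝔻), the composition operator C_φ : H²_β → H²_β is a bounded invertible operator; consequently the multiplication operator M_z is similar to M_φ on H²_β (i.e. M_z is weakly homogeneous on H²_β). -/
noncomputable section

open Complex Filter Topology

/-- The sequence-space (ℓ²) model of a weighted Hardy space `H²_β`.
An element `a : H2` represents the analytic function whose `k`-th Taylor
coefficient is `a k / β k` (so that `‖a‖` is exactly the `H²_β`-norm). -/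
abbrev H2 : Type := lp (fun _ : ℕ => ℂ) 2

/-- The direct sum (ℓ²-sense) of `m` copies of `H2`. -/
abbrev Hm (m : ℕ) : Type := PiLp 2 (fun _ : Fin m => H2)

/-- The open unit disk 𝔻 ⊆ ℂ. -/
def unitDisk : Set ℂ := Metric.ball 0 1

/-- `β_0 = 1` and `β_k = ∏_{j=1}^k w_j`. -/
def betaSeq (w : ℕ → ℝ) (k : ℕ) : ℝ := ∏ j ∈ Finset.Icc 1 k, w j

/-- The analytic function on 𝔻 represented by the vector `a` in the model of `H²_β`:
`f(z) = ∑_k (a k / β k) z^k`. -/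
def repFun (β : ℕ → ℝ) (a : H2) (z : ℂ) : ℂ := ∑' k, (a k / (β k : ℂ)) * z ^ k

/-- `T` is (the ℓ²-model of) the multiplication operator `M_g` on `H²_β`.
Existence of such a `T` says precisely that `M_g` is bounded on `H²_β`. -/
def RepMul (β : ℕ → ℝ) (g : ℂ → ℂ) (T : H2 →L[ℂ] H2) : Prop :=
  ∀ a : H2, ∀ z ∈ unitDisk, repFun β (T a) z = g z * repFun β a z

/-- `T` is (the ℓ²-model of) the composition operator `C_ψ` on `H²_β`.
Existence of such a `T` says precisely that `C_ψ` is bounded on `H²_β`. -/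
def RepComp (β : ℕ → ℝ) (ψ : ℂ → ℂ) (T : H2 →L[ℂ] H2) : Prop :=
  ∀ a : H2, ∀ z ∈ unitDisk, repFun β (T a) z = repFun β a (ψ z)

/-- The Möbius factor `φ_{z₀}(z) = (z₀ - z)/(1 - conj z₀ · z)`. -/
def mobius (z₀ z : ℂ) : ℂ := (z₀ - z) / (1 - (starRingEnd ℂ) z₀ * z)

/-- `φ` belongs to `Aut(𝔻)`, i.e. `φ(z) = e^{iθ}(z₀ - z)/(1 - conj z₀ · z)`. -/
def IsDiskAut (φ : ℂ → ℂ) : Prop :=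
  ∃ (θ : ℝ) (z₀ : ℂ), z₀ ∈ unitDisk ∧
    ∀ z, φ z = Complex.exp (θ * Complex.I) * mobius z₀ z

/-- `B` is a finite Blaschke product of order `m`. -/
def IsBlaschke (m : ℕ) (B : ℂ → ℂ) : Prop :=
  ∃ (θ : ℝ) (zs : Fin m → ℂ), (∀ j, zs j ∈ unitDisk) ∧
    ∀ z, B z = Complex.exp (θ * Complex.I) * ∏ j, mobius (zs j) z

/-- `w` is a positive weight sequence tending to `1` such that the weighted Hardy
space `H²_β` is of polynomial growth: `sup_k (k+1)|w_k - 1| < ∞`. -/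
def PolyGrowth (w : ℕ → ℝ) : Prop :=
  (∀ k, 1 ≤ k → 0 < w k) ∧ Tendsto w atTop (nhds 1) ∧
    ∃ M : ℝ, ∀ k : ℕ, 1 ≤ k → ((k : ℝ) + 1) * |w k - 1| ≤ M

/-- `f` is analytic on an open neighbourhood of the closed unit disk. -/
def AnalyticOnClosedDisk (f : ℂ → ℂ) : Prop :=
  ∃ U : Set ℂ, IsOpen U ∧ Metric.closedBall (0:ℂ) 1 ⊆ U ∧ AnalyticOnNhd ℂ f U

/-!
Write `φ = l * mobius a` with `‖l‖ = 1` and join it to the rotation `z ↦ -l * z` by the maps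
`φ_t = l * mobius (t * a)`, `0 ≤ t ≤ 1`. They satisfy the transport equation
`(1 - t² ‖a‖²) ∂_t φ_t = (conj a * z² - a) ∂_z φ_t`, so for a polynomial `f` the Taylor coefficients
of `f ∘ φ_t` evolve under a tridiagonal linear flow. In the energy `∑ k, β_k² ‖c_k‖²` the leading
terms of this flow cancel after summation by parts; what is left is the commutator
`k β_{k+1}² - (k+1) β_k²`, which polynomial growth bounds by a multiple of `β_k β_{k+1}`. Grönwall's
inequality then bounds `C_φ` on polynomials, and density extends it to `H²_β`. The inverse of `φ` is
again an automorphism, so `C_φ` is invertible and `M_φ = C_φ M_z C_φ⁻¹`.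
-/

section Weights

variable {w : ℕ → ℝ}

lemma betaSeq_succ (w : ℕ → ℝ) (k : ℕ) : betaSeq w (k + 1) = w (k + 1) * betaSeq w k := by
  rw [betaSeq, Finset.prod_Icc_succ_top (by lia), mul_comm, betaSeq]

lemma betaSeq_pos (hw : ∀ k, 1 ≤ k → 0 < w k) (k : ℕ) : 0 < betaSeq w k :=
  Finset.prod_pos fun j hj => hw j (Finset.mem_Icc.1 hj).1

lemma summable_mul_pow_of_tendsto_ratio_one {u s : ℕ → ℝ} (hs : Tendsto s atTop (𝓝 1))
    (hu : ∀ k, u (k + 1) = s k * u k) {q : ℝ} (hq : |q| < 1) :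
    Summable fun k => u k * q ^ k := by
  obtain ⟨r, hqr, hr⟩ := exists_between hq
  have hratio : Tendsto (fun k => |s k * q|) atTop (𝓝 |q|) := by
    simpa using (hs.mul_const q).abs
  refine summable_of_ratio_norm_eventually_le hr ?_
  filter_upwards [hratio.eventually_le_const hqr] with k hk
  calc ‖u (k + 1) * q ^ (k + 1)‖ = |s k * q| * ‖u k * q ^ k‖ := by
        rw [hu, Real.norm_eq_abs, Real.norm_eq_abs, ← abs_mul]
        ring_nf
    _ ≤ r * ‖u k * q ^ k‖ := by gcongr

lemma tendsto_weight_succ (hw : Tendsto w atTop (𝓝 1)) :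
    Tendsto (fun k => w (k + 1)) atTop (𝓝 1) :=
  (tendsto_add_atTop_iff_nat 1).2 hw

lemma tendsto_add_one_mul_betaSeq_sq_mul_pow (hw : Tendsto w atTop (𝓝 1)) {q : ℝ}
    (hq : |q| < 1) :
    Tendsto (fun k : ℕ => (k + 1) * betaSeq w k ^ 2 * q ^ k) atTop (𝓝 0) := by
  have hratio : Tendsto (fun k : ℕ => (1 + 1 / ((k : ℝ) + 1)) * w (k + 1) ^ 2) atTop (𝓝 1) := by
    simpa using (tendsto_one_div_add_atTop_nhds_zero_nat (𝕜 := ℝ)).const_add 1 |>.mul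
      ((tendsto_weight_succ hw).pow 2)
  refine (summable_mul_pow_of_tendsto_ratio_one hratio (fun k => ?_) hq).tendsto_atTop_zero
  rw [betaSeq_succ]
  push_cast
  field_simp

lemma exists_inv_weight_succ_le (hw : Tendsto w atTop (𝓝 1)) : ∃ V, ∀ k, (w (k + 1))⁻¹ ≤ V := by
  obtain ⟨V, hV⟩ := ((tendsto_weight_succ hw).inv₀ one_ne_zero).bddAbove_range
  exact ⟨V, fun k => hV ⟨k, rfl⟩⟩

lemma exists_betaSeq_succ_le (hpos : ∀ k, 1 ≤ k → 0 < w k) (hw : Tendsto w atTop (𝓝 1)) :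
    ∃ W, 0 ≤ W ∧ ∀ k, betaSeq w (k + 1) ≤ W * betaSeq w k := by
  obtain ⟨W, hW⟩ := (tendsto_weight_succ hw).bddAbove_range
  refine ⟨W, (hpos 1 le_rfl).le.trans (hW ⟨0, rfl⟩), fun k => ?_⟩
  rw [betaSeq_succ]
  exact mul_le_mul_of_nonneg_right (hW ⟨k, rfl⟩) (betaSeq_pos hpos k).le

-- With `v = w (k + 1)`, the left-hand side is `β_k β_{k+1} |k (v - 1) (1 + v⁻¹) - v⁻¹|`, and
-- polynomial growth is exactly the boundedness of `k (v - 1)`.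
lemma PolyGrowth.exists_abs_commutator_le (hw : PolyGrowth w) : ∃ C, 0 ≤ C ∧ ∀ k : ℕ,
    |k * betaSeq w (k + 1) ^ 2 - (k + 1) * betaSeq w k ^ 2| ≤
      C * (betaSeq w k * betaSeq w (k + 1)) := by
  obtain ⟨V, hV⟩ := exists_inv_weight_succ_le hw.2.1
  obtain ⟨M, hM⟩ := hw.2.2
  have hM0 : 0 ≤ M := le_trans (by positivity) (hM 1 le_rfl)
  have hV0 : 0 ≤ V := (inv_pos.2 (hw.1 1 le_rfl)).le.trans (hV 0)
  refine ⟨M * (1 + V) + V, by positivity, fun k => ?_⟩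
  have hv := hw.1 (k + 1) (by lia)
  have hVk := hV k
  have hMk : |k * (w (k + 1) - 1)| ≤ M := by
    refine le_trans ?_ (hM (k + 1) (by lia))
    rw [abs_mul, Nat.abs_cast]
    gcongr
    push_cast
    linarith
  have hβ := betaSeq_pos hw.1 k
  rw [betaSeq_succ]
  generalize w (k + 1) = v at *
  generalize betaSeq w k = b at *
  calc |k * (v * b) ^ 2 - (k + 1) * b ^ 2|
      = |k * (v - 1) * (1 + v⁻¹) - v⁻¹| * (b * (v * b)) := by
        rw [← abs_of_pos (by positivity : 0 < b * (v * b)), ← abs_mul]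
        congr 1
        field_simp
        ring
    _ ≤ (M * (1 + V) + V) * (b * (v * b)) := by
        gcongr
        refine (abs_sub _ _).trans ?_
        rw [abs_mul, abs_of_pos (by positivity : 0 < 1 + v⁻¹), abs_of_pos (inv_pos.2 hv)]
        gcongr

end Weights

section Transport

open scoped RealInnerProductSpace ComplexConjugate

lemma sum_mul_flow_by_parts (b u : ℕ → ℝ) (N : ℕ) :
    ∑ k ∈ Finset.range (N + 1), b k * ((k - 1 : ℕ) * u (k - 1) - (k + 1) * u k) =
      ∑ k ∈ Finset.range N, u k * (k * b (k + 1) - (k + 1) * b k) - (N + 1) * b N * u N := by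
  induction N with
  | zero => simp
  | succ N ih =>
    rw [Finset.sum_range_succ, ih, Finset.sum_range_succ, Nat.add_sub_cancel]
    push_cast
    ring

lemma sum_two_mul_mul_succ_le (x : ℕ → ℝ) (N : ℕ) :
    ∑ k ∈ Finset.range N, 2 * (x k * x (k + 1)) ≤ 2 * ∑ k ∈ Finset.range (N + 1), x k ^ 2 := by
  calc ∑ k ∈ Finset.range N, 2 * (x k * x (k + 1))
      ≤ ∑ k ∈ Finset.range N, (x k ^ 2 + x (k + 1) ^ 2) :=
        Finset.sum_le_sum fun k _ => by linarith [two_mul_le_add_sq (x k) (x (k + 1))]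
    _ = (∑ k ∈ Finset.range (N + 1), x k ^ 2 - x N ^ 2) +
          (∑ k ∈ Finset.range (N + 1), x k ^ 2 - x 0 ^ 2) := by
        rw [Finset.sum_add_distrib]
        congr 1
        · rw [Finset.sum_range_succ]; ring
        · rw [Finset.sum_range_succ']; ring
    _ ≤ 2 * ∑ k ∈ Finset.range (N + 1), x k ^ 2 := by
        linarith [sq_nonneg (x N), sq_nonneg (x 0)]

/-- The `k`-th Taylor coefficient of `(conj a * z ^ 2 - a) * F'(z)` when `F` has Taylor
coefficients `c`: the infinitesimal generator of the family `t ↦ mobius (t * a)`. For `k = 0` the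
truncated `k - 1` is harmless, since it also appears as a factor. -/
def flowField (a : ℂ) (c : ℕ → ℂ) (k : ℕ) : ℂ :=
  conj a * ((k - 1 : ℕ) * c (k - 1)) - a * ((k + 1) * c (k + 1))

lemma inner_flowField (a : ℂ) (c : ℕ → ℂ) (k : ℕ) :
    ⟪c k, flowField a c k⟫ = (k - 1 : ℕ) * ⟪a * c (k - 1 + 1), c (k - 1)⟫ -
      (k + 1) * ⟪a * c (k + 1), c k⟫ := by
  rcases k with _ | k <;>
  · simp only [flowField, Complex.inner, Nat.add_sub_cancel, Nat.zero_sub, Nat.cast_zero,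
      Complex.zero_re, Complex.zero_im, Complex.one_re, Complex.one_im, Complex.natCast_re,
      Complex.natCast_im, Complex.conj_re, Complex.conj_im, Complex.add_re, Complex.add_im,
      Complex.sub_re, Complex.sub_im, Complex.mul_re, Complex.mul_im]
    ring

variable {β : ℕ → ℝ} {C : ℝ}

lemma sum_inner_flowField_le (hC : 0 ≤ C)
    (hβ : ∀ k : ℕ, |k * β (k + 1) ^ 2 - (k + 1) * β k ^ 2| ≤ C * (β k * β (k + 1)))
    (a : ℂ) (c : ℕ → ℂ) (N : ℕ) :
    ∑ k ∈ Finset.range (N + 1), β k ^ 2 * (2 * ⟪c k, flowField a c k⟫) ≤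
      2 * C * ‖a‖ * ∑ k ∈ Finset.range (N + 1), (β k * ‖c k‖) ^ 2 +
        2 * ‖a‖ * ((N + 1) * β N ^ 2 * (‖c N‖ * ‖c (N + 1)‖)) := by
  set u : ℕ → ℝ := fun k => ⟪a * c (k + 1), c k⟫
  have hu (k : ℕ) : |u k| ≤ ‖a‖ * (‖c k‖ * ‖c (k + 1)‖) :=
    (abs_real_inner_le_norm _ _).trans_eq (by rw [norm_mul]; ring)
  have hbulk (k : ℕ) : 2 * (u k * (k * β (k + 1) ^ 2 - (k + 1) * β k ^ 2)) ≤
      C * ‖a‖ * (2 * ((β k * ‖c k‖) * (β (k + 1) * ‖c (k + 1)‖))) :=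
    calc 2 * (u k * (k * β (k + 1) ^ 2 - (k + 1) * β k ^ 2))
        ≤ 2 * (|u k| * |k * β (k + 1) ^ 2 - (k + 1) * β k ^ 2|) := by
          rw [← abs_mul]; gcongr; exact le_abs_self _
      _ ≤ 2 * ((‖a‖ * (‖c k‖ * ‖c (k + 1)‖)) * (C * (β k * β (k + 1)))) := by
          gcongr
          exacts [hu k, hβ k]
      _ = C * ‖a‖ * (2 * ((β k * ‖c k‖) * (β (k + 1) * ‖c (k + 1)‖))) := by ring
  calc ∑ k ∈ Finset.range (N + 1), β k ^ 2 * (2 * ⟪c k, flowField a c k⟫)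
      = 2 * ∑ k ∈ Finset.range (N + 1), β k ^ 2 *
          ((k - 1 : ℕ) * u (k - 1) - (k + 1) * u k) := by
        rw [Finset.mul_sum]
        exact Finset.sum_congr rfl fun k _ => by rw [inner_flowField]; ring
    _ = ∑ k ∈ Finset.range N, 2 * (u k * (k * β (k + 1) ^ 2 - (k + 1) * β k ^ 2)) +
          2 * ((N + 1) * β N ^ 2 * -u N) := by
        rw [sum_mul_flow_by_parts (fun k => β k ^ 2), ← Finset.mul_sum]; ring
    _ ≤ C * ‖a‖ * (2 * ∑ k ∈ Finset.range (N + 1), (β k * ‖c k‖) ^ 2) +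
          2 * ((N + 1) * β N ^ 2 * (‖a‖ * (‖c N‖ * ‖c (N + 1)‖))) := by
        gcongr
        · refine (Finset.sum_le_sum fun k _ => hbulk k).trans ?_
          rw [← Finset.mul_sum]
          gcongr
          exact sum_two_mul_mul_succ_le (fun k => β k * ‖c k‖) N
        · exact (neg_le_abs _).trans (hu N)
    _ = _ := by ring

lemma energy_le_gronwallBound (hC : 0 ≤ C)
    (hβ : ∀ k : ℕ, |k * β (k + 1) ^ 2 - (k + 1) * β k ^ 2| ≤ C * (β k * β (k + 1)))
    {a : ℂ} {c : ℕ → ℝ → ℂ} {v : ℝ → ℝ} {L : ℝ}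
    (hv : ∀ t ∈ Set.Ico 0 1, 0 ≤ v t ∧ v t ≤ L)
    (hc : ∀ k, ∀ t ∈ Set.Icc (0 : ℝ) 1,
      HasDerivAt (c k) (v t * flowField a (fun j => c j t) k) t)
    {N : ℕ} {ε M : ℝ} (hε : ∀ t ∈ Set.Ico (0 : ℝ) 1,
      (N + 1) * β N ^ 2 * (‖c N t‖ * ‖c (N + 1) t‖) ≤ ε)
    (h0 : ∑ k ∈ Finset.range (N + 1), (β k * ‖c k 0‖) ^ 2 ≤ M) :
    ∑ k ∈ Finset.range (N + 1), (β k * ‖c k 1‖) ^ 2 ≤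
      gronwallBound M (2 * C * ‖a‖ * L) (2 * ‖a‖ * ε * L) 1 := by
  set E : ℝ → ℝ := fun t => ∑ k ∈ Finset.range (N + 1), (β k * ‖c k t‖) ^ 2
  set E' : ℝ → ℝ := fun t => v t * ∑ k ∈ Finset.range (N + 1),
    β k ^ 2 * (2 * ⟪c k t, flowField a (fun j => c j t) k⟫)
  have hE (t) (ht : t ∈ Set.Icc (0 : ℝ) 1) : HasDerivAt E (E' t) t := by
    simp only [E, E', Finset.mul_sum, mul_pow]
    refine HasDerivAt.fun_sum fun k _ => ((hc k t ht).norm_sq.const_mul (β k ^ 2)).congr_deriv ?_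
    rw [← Complex.real_smul, real_inner_smul_right]
    ring
  have hE' (t) (ht : t ∈ Set.Ico (0 : ℝ) 1) :
      E' t ≤ 2 * C * ‖a‖ * L * E t + 2 * ‖a‖ * ε * L := by
    have : 0 ≤ E t := Finset.sum_nonneg fun k _ => sq_nonneg _
    have hε0 : 0 ≤ ε := le_trans (by positivity) (hε t ht)
    calc E' t ≤ v t * (2 * C * ‖a‖ * E t + 2 * ‖a‖ * ε) := by
          refine mul_le_mul_of_nonneg_left ?_ (hv t ht).1
          refine (sum_inner_flowField_le hC hβ a (fun j => c j t) N).trans ?_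
          gcongr
          exact hε t ht
      _ ≤ L * (2 * C * ‖a‖ * E t + 2 * ‖a‖ * ε) := by
          gcongr
          exact (hv t ht).2
      _ = _ := by ring
  simpa using le_gronwallBound_of_liminf_deriv_right_le
    (fun t ht => (hE t ht).continuousAt.continuousWithinAt)
    (fun t ht r hr => (hE t (Set.Ico_subset_Icc_self ht)).hasDerivWithinAt.liminf_right_slope_le hr)
    h0 hE' 1 (Set.right_mem_Icc.2 zero_le_one)

theorem energy_le_of_hasDerivAt_flowField (hC : 0 ≤ C)
    (hβ : ∀ k : ℕ, |k * β (k + 1) ^ 2 - (k + 1) * β k ^ 2| ≤ C * (β k * β (k + 1)))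
    {a : ℂ} {c : ℕ → ℝ → ℂ} {v : ℝ → ℝ} {L : ℝ}
    (hv : ∀ t ∈ Set.Ico 0 1, 0 ≤ v t ∧ v t ≤ L)
    (hc : ∀ k, ∀ t ∈ Set.Icc (0 : ℝ) 1,
      HasDerivAt (c k) (v t * flowField a (fun j => c j t) k) t)
    {ε : ℕ → ℝ} (hε0 : Tendsto ε atTop (𝓝 0)) (hε : ∀ N, ∀ t ∈ Set.Ico (0 : ℝ) 1,
      (N + 1) * β N ^ 2 * (‖c N t‖ * ‖c (N + 1) t‖) ≤ ε N)
    {M : ℝ} (h0 : ∀ N, ∑ k ∈ Finset.range N, (β k * ‖c k 0‖) ^ 2 ≤ M) (N : ℕ) :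
    ∑ k ∈ Finset.range N, (β k * ‖c k 1‖) ^ 2 ≤ M * Real.exp (2 * C * ‖a‖ * L) := by
  have hlim : Tendsto (fun n => gronwallBound M (2 * C * ‖a‖ * L) (2 * ‖a‖ * ε n * L) 1) atTop
      (𝓝 (M * Real.exp (2 * C * ‖a‖ * L))) := by
    have := (gronwallBound_continuous_ε M (2 * C * ‖a‖ * L) 1).tendsto 0
    rw [gronwallBound_ε0, mul_one] at this
    exact this.comp (by simpa using (hε0.const_mul (2 * ‖a‖)).mul_const L)
  refine ge_of_tendsto hlim ?_
  filter_upwards [eventually_ge_atTop N] with n hn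
  calc ∑ k ∈ Finset.range N, (β k * ‖c k 1‖) ^ 2
      ≤ ∑ k ∈ Finset.range (n + 1), (β k * ‖c k 1‖) ^ 2 :=
        Finset.sum_le_sum_of_subset_of_nonneg (Finset.range_subset_range.2 (by lia))
          fun _ _ _ => sq_nonneg _
    _ ≤ _ := energy_le_gronwallBound hC hβ hv hc (hε n) (h0 _)

end Transport

section WeightedSpace

open scoped ComplexConjugate Polynomial PowerSeries

lemma lp_two_sum_sq_norm_le (a : H2) (s : Finset ℕ) : ∑ k ∈ s, ‖a k‖ ^ 2 ≤ ‖a‖ ^ 2 := by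
  simpa using lp.sum_rpow_le_norm_rpow (p := 2) (by simp) a s

lemma exists_lp_two_of_sum_range_le {a : ℕ → ℂ} {C : ℝ} (hC : 0 ≤ C)
    (ha : ∀ N, ∑ k ∈ Finset.range N, ‖a k‖ ^ 2 ≤ C ^ 2) :
    ∃ b : H2, ⇑b = a ∧ ‖b‖ ≤ C := by
  have hfin (s : Finset ℕ) : ∑ k ∈ s, ‖a k‖ ^ (2 : ENNReal).toReal ≤
      C ^ (2 : ENNReal).toReal := by
    obtain ⟨N, hN⟩ := s.exists_nat_subset_range
    simpa using (Finset.sum_le_sum_of_subset_of_nonneg hN fun _ _ _ => by positivity).trans (ha N)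
  exact ⟨⟨a, memℓp_gen' hfin⟩, rfl, lp.norm_le_of_forall_sum_le (by simp) hC hfin⟩

/-- The coordinates of the reproducing kernel at `z`: pairing with this vector is evaluation at
`z` of the function represented by an element of `H2`. -/
def pointKernel (β : ℕ → ℝ) (z : ℂ) (k : ℕ) : ℂ := conj (z ^ k / β k)

lemma memℓp_pointKernel_betaSeq {w : ℕ → ℝ} (hpos : ∀ k, 1 ≤ k → 0 < w k)
    (hw : Tendsto w atTop (𝓝 1)) {z : ℂ} (hz : z ∈ unitDisk) :
    Memℓp (pointKernel (betaSeq w) z) 2 := by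
  have hz' : |‖z‖ ^ 2| < 1 := by
    rw [abs_of_nonneg (sq_nonneg _)]
    exact pow_lt_one₀ (norm_nonneg z) (mem_ball_zero_iff.1 hz) two_ne_zero
  have hratio : Tendsto (fun k => ((w (k + 1))⁻¹) ^ 2) atTop (𝓝 1) := by
    simpa using ((tendsto_weight_succ hw).inv₀ one_ne_zero).pow 2
  refine memℓp_gen ?_
  refine (summable_mul_pow_of_tendsto_ratio_one (u := fun k => ((betaSeq w k)⁻¹) ^ 2) hratio
    (fun k => ?_) hz').congr fun k => ?_
  · rw [betaSeq_succ, mul_inv, mul_pow]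
  · simp only [pointKernel, RCLike.norm_conj, norm_div, norm_pow, Complex.norm_real,
      Real.norm_of_nonneg (betaSeq_pos hpos k).le, ENNReal.toReal_ofNat, Real.rpow_ofNat]
    ring

variable {β : ℕ → ℝ}

lemma hasSum_repFun {z : ℂ} (hz : Memℓp (pointKernel β z) 2) (a : H2) :
    HasSum (fun k => a k / (β k : ℂ) * z ^ k) (repFun β a z) := by
  refine Summable.hasSum ((lp.summable_inner (𝕜 := ℂ) (⟨_, hz⟩ : H2) a).congr fun k => ?_)
  simp only [pointKernel, map_div₀, map_pow, conj_ofReal, RCLike.inner_apply,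
    RingHomCompTriple.comp_apply, RingHom.id_apply]
  ring

lemma continuous_repFun {z : ℂ} (hz : Memℓp (pointKernel β z) 2) :
    Continuous fun a => repFun β a z := by
  suffices (fun a => repFun β a z) = fun a => inner ℂ (⟨_, hz⟩ : H2) a from
    this ▸ continuous_const.inner continuous_id
  funext a
  rw [lp.inner_eq_tsum, repFun]
  refine tsum_congr fun k => ?_
  simp only [pointKernel, map_div₀, map_pow, conj_ofReal, RCLike.inner_apply,
    RingHomCompTriple.comp_apply, RingHom.id_apply]
  ring

lemma hasFPowerSeriesOnBall_repFun (hβ : ∀ z ∈ unitDisk, Memℓp (pointKernel β z) 2) (a : H2) :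
    HasFPowerSeriesOnBall (repFun β a)
      (FormalMultilinearSeries.ofScalars ℂ fun k => a k / (β k : ℂ)) 0 1 where
  r_le := by
    refine ENNReal.le_of_forall_nnreal_lt fun r hr => ?_
    refine FormalMultilinearSeries.le_radius_of_summable _ ?_
    have hr' : ((r : ℝ) : ℂ) ∈ unitDisk := by simpa [unitDisk] using hr
    simpa using (hasSum_repFun (hβ _ hr') a).summable.norm
  r_pos := one_pos
  hasSum {y} hy := by
    have hy' : y ∈ unitDisk := by
      rwa [unitDisk, ← Metric.eball_ofReal, ENNReal.ofReal_one]
    simpa [FormalMultilinearSeries.ofScalars_apply_eq, mul_comm] using hasSum_repFun (hβ y hy') a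

lemma eq_of_repFun_eq (hβ0 : ∀ k, β k ≠ 0) (hβ : ∀ z ∈ unitDisk, Memℓp (pointKernel β z) 2)
    {a b : H2} (hab : ∀ z ∈ unitDisk, repFun β a z = repFun β b z) : a = b := by
  have hb := (hasFPowerSeriesOnBall_repFun hβ b).hasFPowerSeriesAt.congr
    (Filter.eventuallyEq_of_mem (Metric.ball_mem_nhds 0 one_pos) hab).symm
  have hcoeff := FormalMultilinearSeries.ofScalars_series_injective ℂ ℂ
    ((hasFPowerSeriesOnBall_repFun hβ a).hasFPowerSeriesAt.eq_formalMultilinearSeries hb)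
  ext k
  exact (div_left_inj' (Complex.ofReal_ne_zero.2 (hβ0 k))).1 (congrFun hcoeff k)

/-- The element of `H2` representing a polynomial. -/
def ofPolynomial (β : ℕ → ℝ) : ℂ[X] →ₗ[ℂ] H2 where
  toFun f := ⟨fun k => β k * f.coeff k, by
    refine (memℓp_zero (f.support.finite_toSet.subset fun k hk => ?_)).of_exponent_ge zero_le
    exact Polynomial.mem_support_iff.2 (right_ne_zero_of_mul hk)⟩
  map_add' f g := by
    ext k
    exact (congrArg _ (Polynomial.coeff_add f g k)).trans (mul_add _ _ _)
  map_smul' r f := by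
    ext k
    exact (congrArg _ (Polynomial.coeff_smul r f k)).trans (mul_left_comm _ _ _)

@[simp]
lemma ofPolynomial_apply (f : ℂ[X]) (k : ℕ) : ofPolynomial β f k = β k * f.coeff k := rfl

lemma ofPolynomial_monomial (hβ0 : ∀ k, β k ≠ 0) (k : ℕ) (r : ℂ) :
    ofPolynomial β (Polynomial.monomial k (r / β k)) = lp.single 2 k r := by
  have hk : (β k : ℂ) ≠ 0 := Complex.ofReal_ne_zero.2 (hβ0 k)
  ext j
  rcases eq_or_ne j k with rfl | hj
  · simp [mul_div_cancel₀, hk]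
  · simp [Polynomial.coeff_monomial_of_ne, hj]

lemma denseRange_ofPolynomial (hβ0 : ∀ k, β k ≠ 0) : DenseRange (ofPolynomial β) := by
  intro a
  refine mem_closure_of_tendsto (lp.hasSum_single (by simp) a) (Eventually.of_forall fun s => ?_)
  exact ⟨∑ k ∈ s, Polynomial.monomial k (a k / β k), by
    simp only [map_sum, ofPolynomial_monomial hβ0]⟩

lemma hasSum_coeff_mul_pow (f : ℂ[X]) (z : ℂ) :
    HasSum (fun k => f.coeff k * z ^ k) (f.eval z) := by
  rw [Polynomial.eval_eq_sum, Polynomial.sum]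
  refine hasSum_sum_of_ne_finset_zero fun k hk => ?_
  rw [Polynomial.notMem_support_iff.1 hk, zero_mul]

lemma repFun_eq_of_hasSum (hβ0 : ∀ k, β k ≠ 0) {a : H2} {c : ℕ → ℂ}
    (hac : ∀ k, a k = β k * c k) {z s : ℂ} (hs : HasSum (fun k => c k * z ^ k) s) :
    repFun β a z = s := by
  refine (tsum_congr fun k => ?_).trans hs.tsum_eq
  rw [hac, mul_div_cancel_left₀ _ (Complex.ofReal_ne_zero.2 (hβ0 k))]

lemma repFun_ofPolynomial (hβ0 : ∀ k, β k ≠ 0) (f : ℂ[X]) (z : ℂ) :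
    repFun β (ofPolynomial β f) z = f.eval z :=
  repFun_eq_of_hasSum hβ0 (fun _ => rfl) (hasSum_coeff_mul_pow f z)

lemma exists_clm_of_sum_range_le (hβ0 : ∀ k, β k ≠ 0) (u : ℂ[X] →ₗ[ℂ] ℂ⟦X⟧) {C : ℝ} (hC : 0 ≤ C)
    (hu : ∀ f N, ∑ k ∈ Finset.range N, (β k * ‖(u f).coeff k‖) ^ 2 ≤
      (C * ‖ofPolynomial β f‖) ^ 2) :
    ∃ T : H2 →L[ℂ] H2, ∀ f k, T (ofPolynomial β f) k = β k * (u f).coeff k := by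
  have hex (f : ℂ[X]) : ∃ b : H2, ⇑b = (fun k => β k * (u f).coeff k) ∧
      ‖b‖ ≤ C * ‖ofPolynomial β f‖ :=
    exists_lp_two_of_sum_range_le (by positivity) fun N => by
      simpa only [norm_mul, Complex.norm_real, Real.norm_eq_abs, mul_pow, sq_abs] using hu f N
  choose U hU hUnorm using hex
  let U' : ℂ[X] →ₗ[ℂ] H2 :=
    { toFun := U
      map_add' f g := by
        ext k
        simp only [lp.coeFn_add, Pi.add_apply, hU, map_add, mul_add]
      map_smul' r f := by
        ext k
        simp [hU, mul_left_comm] }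
  refine ⟨U'.extendOfNorm (ofPolynomial β), fun f k => ?_⟩
  rw [LinearMap.extendOfNorm_eq (denseRange_ofPolynomial hβ0) ⟨C, hUnorm⟩]
  exact congrFun (hU f) k

lemma repComp_of_polynomial (hβ0 : ∀ k, β k ≠ 0)
    (hβ : ∀ z ∈ unitDisk, Memℓp (pointKernel β z) 2) {ψ : ℂ → ℂ}
    (hψ : Set.MapsTo ψ unitDisk unitDisk) {T : H2 →L[ℂ] H2}
    (hT : ∀ f : ℂ[X], ∀ z ∈ unitDisk, repFun β (T (ofPolynomial β f)) z = f.eval (ψ z)) :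
    RepComp β ψ T := by
  intro a z hz
  refine congrFun ((denseRange_ofPolynomial hβ0).equalizer
    ((continuous_repFun (hβ z hz)).comp T.continuous) (continuous_repFun (hβ _ (hψ hz))) ?_) a
  funext f
  simp only [Function.comp_apply, hT f z hz, repFun_ofPolynomial hβ0]

lemma repMul_of_polynomial (hβ0 : ∀ k, β k ≠ 0)
    (hβ : ∀ z ∈ unitDisk, Memℓp (pointKernel β z) 2) {g : ℂ → ℂ} {T : H2 →L[ℂ] H2}
    (hT : ∀ f : ℂ[X], ∀ z ∈ unitDisk, repFun β (T (ofPolynomial β f)) z = g z * f.eval z) :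
    RepMul β g T := by
  intro a z hz
  refine congrFun ((denseRange_ofPolynomial hβ0).equalizer
    ((continuous_repFun (hβ z hz)).comp T.continuous)
    ((continuous_repFun (hβ z hz)).const_mul (g z)) ?_) a
  funext f
  simp only [Function.comp_apply, hT f z hz, repFun_ofPolynomial hβ0]

end WeightedSpace

section MobiusSeries

open scoped Polynomial PowerSeries

variable {R A : Type*} [CommRing R] [CommRing A] [Algebra R A]

/-- The derivation of `A⟦X⟧` that applies a derivation of `A` to every coefficient. -/
def coeffwiseDerivation (D : Derivation R A A) : Derivation R A⟦X⟧ A⟦X⟧ :=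
  Derivation.mk'
    { toFun F := PowerSeries.mk fun k => D (F.coeff k)
      map_add' F G := by ext k; simp
      map_smul' r F := by ext k; simp }
    fun F G => by
      ext k
      simp only [LinearMap.coe_mk, AddHom.coe_mk, PowerSeries.coeff_mk, PowerSeries.coeff_mul,
        smul_eq_mul, map_add, map_sum, Derivation.leibniz, Finset.sum_add_distrib]
      congr 1
      rw [← Finset.Nat.sum_antidiagonal_swap]
      rfl

@[simp]
lemma coeff_coeffwiseDerivation (D : Derivation R A A) (F : A⟦X⟧) (k : ℕ) :
    (coeffwiseDerivation D F).coeff k = D (F.coeff k) := by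
  simp [coeffwiseDerivation]

lemma coeffwiseDerivation_C (D : Derivation R A A) (r : A) :
    coeffwiseDerivation D (PowerSeries.C r) = PowerSeries.C (D r) := by
  ext k
  rcases k with _ | k <;> simp [PowerSeries.coeff_C]

lemma coeffwiseDerivation_X (D : Derivation R A A) :
    coeffwiseDerivation D (PowerSeries.X : A⟦X⟧) = 0 := by
  ext k
  rw [coeff_coeffwiseDerivation, PowerSeries.coeff_X]
  split_ifs <;> simp

/-- The Taylor series at `0` of `z ↦ l * ((p - z) / (1 - q * z))`. -/
def mobiusSeries (l p q : A) : A⟦X⟧ :=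
  PowerSeries.C l * (PowerSeries.C p - PowerSeries.X) * PowerSeries.mk fun k => q ^ k

lemma one_sub_mul_mk_pow (q : A) :
    (1 - PowerSeries.C q * PowerSeries.X) * PowerSeries.mk (fun k => q ^ k) = 1 := by
  ext k
  rcases k with _ | k
  · simp
  · rw [sub_mul, one_mul, mul_assoc, map_sub, PowerSeries.coeff_C_mul,
      PowerSeries.coeff_succ_X_mul, PowerSeries.coeff_mk, PowerSeries.coeff_mk, pow_succ',
      sub_self, PowerSeries.coeff_one, if_neg k.succ_ne_zero]

lemma one_sub_mul_mobiusSeries (l p q : A) :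
    (1 - PowerSeries.C q * PowerSeries.X) * mobiusSeries l p q =
      PowerSeries.C l * (PowerSeries.C p - PowerSeries.X) := by
  rw [mobiusSeries, mul_left_comm, one_sub_mul_mk_pow, mul_one]

lemma coeff_zero_mobiusSeries_mul (l p q : A) (F : A⟦X⟧) :
    (mobiusSeries l p q * F).coeff 0 = l * p * F.coeff 0 := by
  simp [mobiusSeries]

lemma coeff_succ_mobiusSeries_mul (l p q : A) (F : A⟦X⟧) (k : ℕ) :
    (mobiusSeries l p q * F).coeff (k + 1) = q * (mobiusSeries l p q * F).coeff k +
      l * (p * F.coeff (k + 1) - F.coeff k) := by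
  have hF : mobiusSeries l p q * F =
      PowerSeries.C q * (PowerSeries.X * (mobiusSeries l p q * F)) +
        PowerSeries.C l * (PowerSeries.C p * F - PowerSeries.X * F) := by
    linear_combination F * one_sub_mul_mobiusSeries l p q
  conv_lhs => rw [hF]
  simp only [map_add, map_sub, PowerSeries.coeff_C_mul, PowerSeries.coeff_succ_X_mul]

lemma map_mobiusSeries {B : Type*} [CommRing B] (g : A →+* B) (l p q : A) :
    PowerSeries.map g (mobiusSeries l p q) = mobiusSeries (g l) (g p) (g q) := by
  have hgeom : PowerSeries.map g (PowerSeries.mk fun k => q ^ k) =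
      PowerSeries.mk fun k => g q ^ k := by
    ext k
    simp
  simp only [mobiusSeries, map_mul, map_sub, PowerSeries.map_C, PowerSeries.map_X, hgeom]

-- Multiplied by `(1 - q X) ^ 2`, both sides become
-- `l * (1 - p * q) * (D p - D q * X ^ 2)`.
lemma coeffwiseDerivation_mobiusSeries (D : Derivation R A A) {l p q : A} (hl : D l = 0)
    (hpq : p * D q = q * D p) :
    PowerSeries.C (1 - p * q) * coeffwiseDerivation D (mobiusSeries l p q) =
      (PowerSeries.C (D q) * PowerSeries.X ^ 2 - PowerSeries.C (D p)) *
        PowerSeries.derivative A (mobiusSeries l p q) := by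
  set Φ := mobiusSeries l p q
  have hΦ : (1 - PowerSeries.C q * PowerSeries.X) * Φ =
      PowerSeries.C l * (PowerSeries.C p - PowerSeries.X) := one_sub_mul_mobiusSeries l p q
  have ht := congrArg (coeffwiseDerivation D) hΦ
  have hx := congrArg (PowerSeries.derivative A) hΦ
  simp only [Derivation.leibniz, map_sub, Derivation.map_one_eq_zero, coeffwiseDerivation_C,
    coeffwiseDerivation_X, PowerSeries.derivative_C, PowerSeries.derivative_X, smul_eq_mul, hl,
    map_zero] at ht hx
  have hpq' := congrArg (PowerSeries.C (R := A)) hpq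
  have hunit : IsUnit ((1 - PowerSeries.C q * PowerSeries.X) ^ 2 : A⟦X⟧) :=
    (IsUnit.of_mul_eq_one _ (one_sub_mul_mk_pow q)).pow 2
  refine hunit.mul_left_cancel ?_
  simp only [map_mul, map_sub, map_one] at hpq' ⊢
  set P := PowerSeries.C p
  set Q := PowerSeries.C q
  set DQ := PowerSeries.C (D q)
  linear_combination
    (1 - P * Q) * ((1 - Q * PowerSeries.X) * ht + DQ * PowerSeries.X * hΦ +
      PowerSeries.C l * PowerSeries.X * hpq') -
    (DQ * PowerSeries.X ^ 2 - PowerSeries.C (D p)) * ((1 - Q * PowerSeries.X) * hx + Q * hΦ)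

lemma coeff_X_sq_mul_derivative (F : A⟦X⟧) (k : ℕ) :
    (PowerSeries.X ^ 2 * PowerSeries.derivative A F).coeff k = (k - 1 : ℕ) * F.coeff (k - 1) := by
  rcases k with _ | _ | k
  · simp [PowerSeries.coeff_X_pow_mul']
  · simp [PowerSeries.coeff_X_pow_mul']
  · rw [show k + 1 + 1 = k + 2 from rfl, PowerSeries.coeff_X_pow_mul,
      PowerSeries.coeff_derivative, mul_comm]
    push_cast
    rfl

lemma derivation_coeff_aeval_mobiusSeries (D : Derivation R A A) {l p q : A} (hl : D l = 0)
    (hpq : p * D q = q * D p) (f : R[X]) (k : ℕ) :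
    (1 - p * q) * D ((f.aeval (mobiusSeries l p q)).coeff k) =
      D q * ((k - 1 : ℕ) * (f.aeval (mobiusSeries l p q)).coeff (k - 1)) -
        D p * ((k + 1) * (f.aeval (mobiusSeries l p q)).coeff (k + 1)) := by
  have hD := (coeffwiseDerivation D).map_aeval f (mobiusSeries l p q)
  have hx := ((PowerSeries.derivative A).restrictScalars R).map_aeval f (mobiusSeries l p q)
  rw [Derivation.restrictScalars_apply] at hx
  have hflow :
      PowerSeries.C (1 - p * q) * coeffwiseDerivation D (f.aeval (mobiusSeries l p q)) =
        (PowerSeries.C (D q) * PowerSeries.X ^ 2 - PowerSeries.C (D p)) *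
          PowerSeries.derivative A (f.aeval (mobiusSeries l p q)) := by
    rw [hD, hx, Derivation.restrictScalars_apply, smul_eq_mul, smul_eq_mul, mul_left_comm,
      coeffwiseDerivation_mobiusSeries D hl hpq, mul_left_comm]
  have hk := congrArg (PowerSeries.coeff k) hflow
  rw [sub_mul (PowerSeries.C (D q) * _), mul_assoc, map_sub (PowerSeries.coeff k),
    PowerSeries.coeff_C_mul, PowerSeries.coeff_C_mul, PowerSeries.coeff_C_mul,
    coeff_coeffwiseDerivation, coeff_X_sq_mul_derivative, PowerSeries.coeff_derivative] at hk
  rw [hk, mul_comm (PowerSeries.coeff (k + 1) _)]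

end MobiusSeries

section MobiusFlow

open scoped Polynomial PowerSeries ComplexConjugate

/-- The `k`-th Taylor coefficient at `0` of `z ↦ f (l * mobius (t * a) z)`. -/
def mobiusFlowCoeff (l a : ℂ) (f : ℂ[X]) (k : ℕ) (t : ℝ) : ℂ :=
  (f.aeval (mobiusSeries l (a * t) (conj a * t))).coeff k

-- The coefficients are polynomials in `t`, so the flow identity holds formally over `ℂ[X]`.
lemma hasDerivAt_mobiusFlowCoeff (l a : ℂ) (f : ℂ[X]) (k : ℕ) {t : ℝ}
    (ht : 1 - t ^ 2 * ‖a‖ ^ 2 ≠ 0) :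
    HasDerivAt (mobiusFlowCoeff l a f k)
      (((1 - t ^ 2 * ‖a‖ ^ 2)⁻¹ : ℝ) * flowField a (fun j => mobiusFlowCoeff l a f j t) k) t := by
  set F : ℂ[X]⟦X⟧ := f.aeval (mobiusSeries (Polynomial.C l) (Polynomial.C a * Polynomial.X)
    (Polynomial.C (conj a) * Polynomial.X)) with hF
  have heval (j : ℕ) : mobiusFlowCoeff l a f j = fun s : ℝ => (F.coeff j).eval (s : ℂ) := by
    funext s
    have hmap : PowerSeries.mapAlgHom (Polynomial.aeval (s : ℂ)) F =
        f.aeval (mobiusSeries l (a * s) (conj a * s)) := by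
      rw [← Polynomial.aeval_algHom_apply, PowerSeries.mapAlgHom_apply]
      simp [map_mobiusSeries]
    rw [mobiusFlowCoeff, ← hmap, PowerSeries.mapAlgHom_apply, PowerSeries.coeff_map]
    simp
  have hflow : ((1 - t ^ 2 * ‖a‖ ^ 2 : ℝ) : ℂ) * (F.coeff k).derivative.eval (t : ℂ) =
      flowField a (fun j => (F.coeff j).eval (t : ℂ)) k := by
    have := congrArg (Polynomial.eval (t : ℂ)) (derivation_coeff_aeval_mobiusSeries
      Polynomial.derivative' (l := Polynomial.C l) (p := Polynomial.C a * Polynomial.X)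
      (q := Polynomial.C (conj a) * Polynomial.X) (by simp) (by simp; ring) f k)
    rw [← hF] at this
    simp only [Polynomial.derivative'_apply, Polynomial.derivative_C_mul_X, Polynomial.eval_mul,
      Polynomial.eval_sub, Polynomial.eval_add, Polynomial.eval_natCast, Polynomial.eval_one,
      Polynomial.eval_C, Polynomial.eval_X] at this
    rw [flowField, ← this, Complex.ofReal_sub, Complex.ofReal_mul, Complex.ofReal_pow _ 2,
      Complex.ofReal_pow, ← Complex.mul_conj']
    push_cast
    ring
  simp only [heval]
  refine ((F.coeff k).hasDerivAt (t : ℂ)).comp_ofReal.congr_deriv ?_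
  rw [← hflow, ← mul_assoc, ← Complex.ofReal_mul, inv_mul_cancel₀ ht, Complex.ofReal_one, one_mul]

end MobiusFlow

section MobiusSeriesEstimates

open scoped Polynomial PowerSeries

variable {𝕜 : Type*} [NormedField 𝕜]

lemma norm_coeff_mobiusSeries_mul_le {l p q : 𝕜} {F : 𝕜⟦X⟧} {A B σ K : ℝ} (hσ : 0 < σ)
    (hB : B < σ) (hp : ‖p‖ ≤ A) (hq : ‖q‖ ≤ B) (hF : ∀ k, ‖F.coeff k‖ ≤ K * σ ^ k) (k : ℕ) :
    ‖(mobiusSeries l p q * F).coeff k‖ ≤ ‖l‖ * K * (A + (A * σ + 1) / (σ - B)) * σ ^ k := by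
  have hA : 0 ≤ A := (norm_nonneg p).trans hp
  have hK : 0 ≤ K := by simpa using (norm_nonneg _).trans (hF 0)
  have hσB : 0 < σ - B := sub_pos.2 hB
  induction k with
  | zero =>
    calc ‖(mobiusSeries l p q * F).coeff 0‖ = ‖l‖ * (‖p‖ * ‖F.coeff 0‖) := by
          rw [coeff_zero_mobiusSeries_mul, norm_mul, norm_mul, mul_assoc]
      _ ≤ ‖l‖ * (A * (K * σ ^ 0)) := by gcongr; exact hF 0
      _ ≤ ‖l‖ * K * (A + (A * σ + 1) / (σ - B)) * σ ^ 0 := by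
        have : 0 ≤ ‖l‖ * K * ((A * σ + 1) / (σ - B)) := by positivity
        linarith
  | succ k ih =>
    calc ‖(mobiusSeries l p q * F).coeff (k + 1)‖
        ≤ ‖q‖ * ‖(mobiusSeries l p q * F).coeff k‖ +
            ‖l‖ * (‖p‖ * ‖F.coeff (k + 1)‖ + ‖F.coeff k‖) := by
          rw [coeff_succ_mobiusSeries_mul]
          refine (norm_add_le _ _).trans ?_
          rw [norm_mul, norm_mul, ← norm_mul p]
          gcongr
          exact norm_sub_le _ _
      _ ≤ B * (‖l‖ * K * (A + (A * σ + 1) / (σ - B)) * σ ^ k) +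
            ‖l‖ * (A * (K * σ ^ (k + 1)) + K * σ ^ k) := by
          gcongr
          exacts [(norm_nonneg q).trans hq, hF _, hF _]
      _ = ‖l‖ * K * (A * (B + (σ - B)) + (A * σ + 1) / (σ - B) * (B + (σ - B)) - A * (σ - B)) *
            σ ^ k := by
          field_simp
          ring
      _ ≤ ‖l‖ * K * (A + (A * σ + 1) / (σ - B)) * σ ^ (k + 1) := by
          have : 0 ≤ ‖l‖ * K * (A * (σ - B)) * σ ^ k := by positivity
          rw [add_sub_cancel, pow_succ]
          linarith

lemma exists_norm_coeff_aeval_mobiusSeries_le (l : 𝕜) {A B σ : ℝ} (hσ : 0 < σ) (hB : B < σ)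
    (f : 𝕜[X]) : ∃ K, ∀ p q : 𝕜, ‖p‖ ≤ A → ‖q‖ ≤ B → ∀ k,
      ‖(f.aeval (mobiusSeries l p q)).coeff k‖ ≤ K * σ ^ k := by
  induction f using Polynomial.induction_on with
  | C r =>
    refine ⟨‖r‖, fun p q _ _ k => ?_⟩
    rw [Polynomial.aeval_C, PowerSeries.algebraMap_apply, PowerSeries.coeff_C]
    split_ifs with hk
    · simp [hk]
    · rw [norm_zero]
      positivity
  | add f g hf hg =>
    obtain ⟨K, hK⟩ := hf
    obtain ⟨K', hK'⟩ := hg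
    refine ⟨K + K', fun p q hp hq k => ?_⟩
    rw [map_add, map_add, add_mul]
    exact (norm_add_le _ _).trans (add_le_add (hK p q hp hq k) (hK' p q hp hq k))
  | monomial n r hn =>
    obtain ⟨K, hK⟩ := hn
    refine ⟨‖l‖ * K * (A + (A * σ + 1) / (σ - B)), fun p q hp hq k => ?_⟩
    rw [pow_succ', mul_left_comm, map_mul, Polynomial.aeval_X]
    exact norm_coeff_mobiusSeries_mul_le hσ hB hp hq (hK p q hp hq) k

lemma coeff_aeval_mobiusSeries_zero_zero (l : 𝕜) (f : 𝕜[X]) (k : ℕ) :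
    (f.aeval (mobiusSeries l 0 0)).coeff k = (-l) ^ k * f.coeff k := by
  have hgeom : (PowerSeries.mk fun k => (0 : 𝕜) ^ k) = 1 := by
    simpa using one_sub_mul_mk_pow (0 : 𝕜)
  have hseries : mobiusSeries l 0 0 = PowerSeries.rescale (-l) PowerSeries.X := by
    rw [mobiusSeries, hgeom, PowerSeries.rescale_X]
    simp
  have haeval : f.aeval (mobiusSeries l 0 0) = PowerSeries.rescale (-l) f := by
    rw [hseries, ← Polynomial.eval₂_C_X_eq_coe, Polynomial.hom_eval₂, Polynomial.aeval_def]
    congr 1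
    ext r k
    rcases k with _ | k <;> simp [PowerSeries.coeff_rescale, PowerSeries.coeff_C]
  rw [haeval, PowerSeries.coeff_rescale, Polynomial.coeff_coe]

end MobiusSeriesEstimates

section PowerSeriesSums

open scoped Polynomial PowerSeries

lemma hasSum_coeff_mul {F G : ℂ⟦X⟧} {z s t : ℂ} (hF : HasSum (fun k => F.coeff k * z ^ k) s)
    (hG : HasSum (fun k => G.coeff k * z ^ k) t) :
    HasSum (fun k => (F * G).coeff k * z ^ k) (s * t) := by
  have hF' := hF.summable.norm
  have hG' := hG.summable.norm
  have hFG (k : ℕ) : (F * G).coeff k * z ^ k = ∑ ij ∈ Finset.HasAntidiagonal.antidiagonal k,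
      F.coeff ij.1 * z ^ ij.1 * (G.coeff ij.2 * z ^ ij.2) := by
    rw [PowerSeries.coeff_mul, Finset.sum_mul]
    refine Finset.sum_congr rfl fun ij hij => ?_
    rw [← Finset.HasAntidiagonal.mem_antidiagonal.1 hij]
    ring
  simp only [hFG]
  rw [← hF.tsum_eq, ← hG.tsum_eq, tsum_mul_tsum_eq_tsum_sum_antidiagonal_of_summable_norm hF' hG']
  exact (summable_norm_sum_mul_antidiagonal_of_summable_norm hF' hG').of_norm.hasSum

lemma hasSum_coeff_aeval {F : ℂ⟦X⟧} {z s : ℂ} (hF : HasSum (fun k => F.coeff k * z ^ k) s)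
    (f : ℂ[X]) : HasSum (fun k => (f.aeval F).coeff k * z ^ k) (f.eval s) := by
  induction f using Polynomial.induction_on with
  | C r => simpa [← Polynomial.coe_C] using hasSum_coeff_mul_pow (Polynomial.C r) z
  | add f g hf hg => simpa [add_mul] using hf.add hg
  | monomial n r hn =>
    rw [pow_succ, ← mul_assoc, map_mul, Polynomial.aeval_X, Polynomial.eval_mul_X]
    exact hasSum_coeff_mul hn hF

lemma hasSum_coeff_mobiusSeries (l p : ℂ) {q z : ℂ} (hqz : ‖q * z‖ < 1) :
    HasSum (fun k => (mobiusSeries l p q).coeff k * z ^ k) (l * ((p - z) / (1 - q * z))) := by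
  have hgeom : HasSum (fun k => (PowerSeries.mk fun k => q ^ k).coeff k * z ^ k)
      (1 - q * z)⁻¹ := by
    simpa only [PowerSeries.coeff_mk, mul_pow] using hasSum_geometric_of_norm_lt_one hqz
  have hlin := hasSum_coeff_mul_pow (Polynomial.C l * (Polynomial.C p - Polynomial.X)) z
  simp only [← Polynomial.coeff_coe] at hlin
  simpa [mobiusSeries, div_eq_mul_inv, mul_assoc] using hasSum_coeff_mul hlin hgeom

end PowerSeriesSums

section Operators

open scoped ComplexConjugate Polynomial PowerSeries

variable {w : ℕ → ℝ}

lemma sum_coeff_X_mul_le {β : ℕ → ℝ} {W : ℝ} (hβ : ∀ k, 0 ≤ β k) (hW : ∀ k, β (k + 1) ≤ W * β k)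
    (f : ℂ[X]) (N : ℕ) :
    ∑ k ∈ Finset.range N, (β k * ‖(Polynomial.X * f).coeff k‖) ^ 2 ≤
      (W * ‖ofPolynomial β f‖) ^ 2 := by
  have hshift : ∑ k ∈ Finset.range N, (β k * ‖(Polynomial.X * f).coeff k‖) ^ 2 ≤
      ∑ k ∈ Finset.range N, (β (k + 1) * ‖f.coeff k‖) ^ 2 := by
    refine (le_add_of_nonneg_right (sq_nonneg _)).trans_eq
      ((Finset.sum_range_succ _ N).symm.trans ?_)
    simp [Finset.sum_range_succ']
  have hterm (k : ℕ) : (β (k + 1) * ‖f.coeff k‖) ^ 2 ≤ W ^ 2 * ‖ofPolynomial β f k‖ ^ 2 := by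
    have := hβ (k + 1)
    rw [← mul_pow, ofPolynomial_apply, norm_mul, Complex.norm_real, Real.norm_of_nonneg (hβ k),
      ← mul_assoc]
    gcongr
    exact hW k
  refine (hshift.trans (Finset.sum_le_sum fun k _ => hterm k)).trans ?_
  rw [← Finset.mul_sum, mul_pow]
  gcongr
  exact lp_two_sum_sq_norm_le _ _

lemma exists_repMul_id (hpos : ∀ k, 1 ≤ k → 0 < w k) (hw : Tendsto w atTop (𝓝 1)) :
    ∃ T : H2 →L[ℂ] H2, RepMul (betaSeq w) (fun z => z) T := by
  have hβ0 (k : ℕ) : betaSeq w k ≠ 0 := (betaSeq_pos hpos k).ne'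
  obtain ⟨W, hW0, hW⟩ := exists_betaSeq_succ_le hpos hw
  obtain ⟨u, hu⟩ : ∃ u : ℂ[X] →ₗ[ℂ] ℂ⟦X⟧, ∀ f k, (u f).coeff k = (Polynomial.X * f).coeff k :=
    ⟨(Polynomial.coeToPowerSeries.algHom ℂ).toLinearMap ∘ₗ LinearMap.mulLeft ℂ Polynomial.X,
      fun f k => by simp [Polynomial.coeToPowerSeries.algHom_apply, ← Polynomial.coeff_coe]⟩
  obtain ⟨T, hT⟩ := exists_clm_of_sum_range_le hβ0 u hW0 fun f N => by
    simpa only [hu] using sum_coeff_X_mul_le (fun k => (betaSeq_pos hpos k).le) hW f N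
  simp only [hu] at hT
  refine ⟨T, repMul_of_polynomial hβ0 (fun z hz => memℓp_pointKernel_betaSeq hpos hw hz)
    fun f z _ => ?_⟩
  simpa using repFun_eq_of_hasSum hβ0 (hT f) (hasSum_coeff_mul_pow (Polynomial.X * f) z)

lemma sum_mobiusFlowCoeff_zero_le {β : ℕ → ℝ} {l : ℂ} (hl : ‖l‖ ≤ 1) (a : ℂ) (f : ℂ[X]) (N : ℕ) :
    ∑ k ∈ Finset.range N, (β k * ‖mobiusFlowCoeff l a f k 0‖) ^ 2 ≤ ‖ofPolynomial β f‖ ^ 2 := by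
  refine (Finset.sum_le_sum fun k _ => ?_).trans (lp_two_sum_sq_norm_le _ (Finset.range N))
  have hk : ‖mobiusFlowCoeff l a f k 0‖ ≤ ‖f.coeff k‖ := by
    simp only [mobiusFlowCoeff, Complex.ofReal_zero, mul_zero, coeff_aeval_mobiusSeries_zero_zero,
      norm_mul, norm_pow, norm_neg]
    exact mul_le_of_le_one_left (norm_nonneg _) (pow_le_one₀ (norm_nonneg l) hl)
  rw [ofPolynomial_apply, norm_mul, Complex.norm_real, Real.norm_eq_abs, mul_pow, mul_pow, sq_abs]
  gcongr

lemma exists_norm_mobiusFlowCoeff_le (l : ℂ) {a : ℂ} {σ : ℝ} (ha : ‖a‖ < σ) (f : ℂ[X]) :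
    ∃ K, ∀ t ∈ Set.Icc (0 : ℝ) 1, ∀ k, ‖mobiusFlowCoeff l a f k t‖ ≤ K * σ ^ k := by
  obtain ⟨K, hK⟩ := exists_norm_coeff_aeval_mobiusSeries_le l (A := ‖a‖)
    ((norm_nonneg a).trans_lt ha) ha f
  refine ⟨K, fun t ht k => hK _ _ ?_ ?_ k⟩ <;>
  simpa [abs_of_nonneg ht.1] using mul_le_of_le_one_right (norm_nonneg a) ht.2

lemma exists_tendsto_zero_mobiusFlowCoeff_mul_le (hw : Tendsto w atTop (𝓝 1)) (l : ℂ) {a : ℂ}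
    (ha : ‖a‖ < 1) (f : ℂ[X]) : ∃ ε : ℕ → ℝ, Tendsto ε atTop (𝓝 0) ∧
      ∀ n, ∀ t ∈ Set.Icc (0 : ℝ) 1, (n + 1) * betaSeq w n ^ 2 *
        (‖mobiusFlowCoeff l a f n t‖ * ‖mobiusFlowCoeff l a f (n + 1) t‖) ≤ ε n := by
  obtain ⟨σ, haσ, hσ1⟩ := exists_between ha
  have hσ0 : 0 < σ := (norm_nonneg a).trans_lt haσ
  have hσ2 : |σ ^ 2| < 1 := by
    rw [abs_of_nonneg (sq_nonneg σ)]
    exact pow_lt_one₀ hσ0.le hσ1 two_ne_zero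
  obtain ⟨K, hK⟩ := exists_norm_mobiusFlowCoeff_le l haσ f
  refine ⟨fun n => K ^ 2 * σ * ((n + 1) * betaSeq w n ^ 2 * (σ ^ 2) ^ n), ?_, fun n t ht => ?_⟩
  · simpa using (tendsto_add_one_mul_betaSeq_sq_mul_pow hw hσ2).const_mul (K ^ 2 * σ)
  calc (n + 1) * betaSeq w n ^ 2 *
        (‖mobiusFlowCoeff l a f n t‖ * ‖mobiusFlowCoeff l a f (n + 1) t‖)
      ≤ (n + 1) * betaSeq w n ^ 2 * (K * σ ^ n * (K * σ ^ (n + 1))) := by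
        gcongr
        exacts [(norm_nonneg _).trans (hK t ht n), hK t ht n, hK t ht (n + 1)]
    _ = K ^ 2 * σ * ((n + 1) * betaSeq w n ^ 2 * (σ ^ 2) ^ n) := by ring

lemma PolyGrowth.exists_sum_coeff_aeval_mobiusSeries_le (hw : PolyGrowth w) {l a : ℂ}
    (hl : ‖l‖ ≤ 1) (ha : ‖a‖ < 1) : ∃ C, 0 ≤ C ∧ ∀ (f : ℂ[X]) (N : ℕ),
      ∑ k ∈ Finset.range N,
        (betaSeq w k * ‖(f.aeval (mobiusSeries l a (conj a))).coeff k‖) ^ 2 ≤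
          (C * ‖ofPolynomial (betaSeq w) f‖) ^ 2 := by
  obtain ⟨C, hC0, hC⟩ := hw.exists_abs_commutator_le
  refine ⟨Real.exp (C * ‖a‖ * (1 - ‖a‖ ^ 2)⁻¹), (Real.exp_pos _).le, fun f N => ?_⟩
  have ha2 : ‖a‖ ^ 2 < 1 := pow_lt_one₀ (norm_nonneg a) ha two_ne_zero
  have hta {t : ℝ} (ht : t ∈ Set.Icc (0 : ℝ) 1) : t ^ 2 * ‖a‖ ^ 2 ≤ ‖a‖ ^ 2 :=
    mul_le_of_le_one_left (sq_nonneg _) (pow_le_one₀ ht.1 ht.2)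
  have hspeed (t : ℝ) (ht : t ∈ Set.Ico (0 : ℝ) 1) :
      0 ≤ (1 - t ^ 2 * ‖a‖ ^ 2)⁻¹ ∧ (1 - t ^ 2 * ‖a‖ ^ 2)⁻¹ ≤ (1 - ‖a‖ ^ 2)⁻¹ := by
    have := hta (Set.Ico_subset_Icc_self ht)
    exact ⟨inv_nonneg.2 (by linarith), inv_anti₀ (by linarith) (by linarith)⟩
  obtain ⟨ε, hε0, hε⟩ := exists_tendsto_zero_mobiusFlowCoeff_mul_le hw.2.1 l ha f
  have henergy := energy_le_of_hasDerivAt_flowField hC0 hC hspeed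
    (fun k t ht => hasDerivAt_mobiusFlowCoeff l a f k (by linarith [hta ht])) hε0
    (fun n t ht => hε n t (Set.Ico_subset_Icc_self ht)) (sum_mobiusFlowCoeff_zero_le hl a f) N
  simp only [mobiusFlowCoeff, Complex.ofReal_one, mul_one] at henergy
  refine henergy.trans_eq ?_
  rw [mul_pow, ← Real.exp_nat_mul, mul_comm]
  push_cast
  ring_nf

lemma norm_conj_mul_lt_one {a z : ℂ} (ha : ‖a‖ < 1) (hz : ‖z‖ < 1) : ‖conj a * z‖ < 1 := by
  rw [norm_mul, RCLike.norm_conj]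
  exact mul_lt_one_of_nonneg_of_lt_one_left (norm_nonneg a) ha hz.le

lemma one_sub_conj_mul_ne_zero {a z : ℂ} (ha : ‖a‖ < 1) (hz : ‖z‖ < 1) : 1 - conj a * z ≠ 0 := by
  intro h
  exact (norm_conj_mul_lt_one ha hz).ne (by rw [← sub_eq_zero.1 h, norm_one])

lemma normSq_one_sub_conj_mul_sub_normSq_sub (a z : ℂ) :
    Complex.normSq (1 - conj a * z) - Complex.normSq (a - z) =
      (1 - Complex.normSq a) * (1 - Complex.normSq z) := by
  simp only [Complex.normSq_apply, Complex.sub_re, Complex.sub_im, Complex.mul_re, Complex.mul_im,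
    Complex.conj_re, Complex.conj_im, Complex.one_re, Complex.one_im]
  ring

lemma norm_mobius_lt_one {a z : ℂ} (ha : ‖a‖ < 1) (hz : ‖z‖ < 1) : ‖mobius a z‖ < 1 := by
  have hden := norm_pos_iff.2 (one_sub_conj_mul_ne_zero ha hz)
  have hpos : 0 < (1 - Complex.normSq a) * (1 - Complex.normSq z) := by
    simp only [Complex.normSq_eq_norm_sq]
    exact mul_pos (sub_pos.2 (pow_lt_one₀ (norm_nonneg _) ha two_ne_zero))
      (sub_pos.2 (pow_lt_one₀ (norm_nonneg _) hz two_ne_zero))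
  rw [mobius, norm_div, div_lt_one hden]
  refine lt_of_pow_lt_pow_left₀ 2 hden.le ?_
  rw [← Complex.normSq_eq_norm_sq, ← Complex.normSq_eq_norm_sq]
  linarith [normSq_one_sub_conj_mul_sub_normSq_sub a z]

lemma mapsTo_mul_mobius {l a : ℂ} (hl : ‖l‖ ≤ 1) (ha : a ∈ unitDisk) :
    Set.MapsTo (fun z => l * mobius a z) unitDisk unitDisk := fun z hz =>
  mem_ball_zero_iff.2 <| by
    rw [norm_mul]
    exact mul_lt_one_of_nonneg_of_lt_one_right hl (norm_nonneg _)
      (norm_mobius_lt_one (mem_ball_zero_iff.1 ha) (mem_ball_zero_iff.1 hz))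

lemma mobius_mobius {a z : ℂ} (ha : ‖a‖ < 1) (hz : ‖z‖ < 1) : mobius a (mobius a z) = z := by
  have hden := one_sub_conj_mul_ne_zero ha hz
  have hden' := one_sub_conj_mul_ne_zero ha (norm_mobius_lt_one ha hz)
  have hmul : mobius a z * (1 - conj a * z) = a - z := div_mul_cancel₀ _ hden
  rw [mobius, div_eq_iff hden']
  linear_combination -hmul

lemma PolyGrowth.exists_repComp_mul_mobius (hw : PolyGrowth w) {l a : ℂ} (hl : ‖l‖ ≤ 1)
    (ha : a ∈ unitDisk) :
    ∃ T : H2 →L[ℂ] H2, RepComp (betaSeq w) (fun z => l * mobius a z) T := by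
  have hβ0 (k : ℕ) : betaSeq w k ≠ 0 := (betaSeq_pos hw.1 k).ne'
  have ha' : ‖a‖ < 1 := mem_ball_zero_iff.1 ha
  obtain ⟨C, hC, hbound⟩ := hw.exists_sum_coeff_aeval_mobiusSeries_le hl ha'
  obtain ⟨T, hT⟩ := exists_clm_of_sum_range_le hβ0
    (Polynomial.aeval (mobiusSeries l a (conj a))).toLinearMap hC hbound
  refine ⟨T, repComp_of_polynomial hβ0 (fun z hz => memℓp_pointKernel_betaSeq hw.1 hw.2.1 hz)
    (mapsTo_mul_mobius hl ha) fun f z hz => repFun_eq_of_hasSum hβ0 (hT f) ?_⟩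
  exact hasSum_coeff_aeval (hasSum_coeff_mobiusSeries l a
    (norm_conj_mul_lt_one ha' (mem_ball_zero_iff.1 hz))) f

end Operators

section DiskAutomorphisms

open scoped ComplexConjugate

variable {φ : ℂ → ℂ}

lemma mobius_mul_of_norm_eq_one {l : ℂ} (hl : ‖l‖ = 1) (a z : ℂ) :
    mobius (l * a) (l * z) = l * mobius a z := by
  have hl' : conj l * l = 1 := by simp [Complex.conj_mul', hl]
  have hden : 1 - conj (l * a) * (l * z) = 1 - conj a * z := by
    rw [map_mul]
    linear_combination (-conj a * z) * hl'
  rw [mobius, mobius, hden, ← mul_sub, mul_div_assoc]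

lemma IsDiskAut.mapsTo (hφ : IsDiskAut φ) : Set.MapsTo φ unitDisk unitDisk := by
  obtain ⟨θ, a, ha, hφ⟩ := hφ
  rw [funext hφ]
  exact mapsTo_mul_mobius (norm_exp_ofReal_mul_I θ).le ha

lemma IsDiskAut.exists_invOn (hφ : IsDiskAut φ) :
    ∃ ψ, IsDiskAut ψ ∧ Set.InvOn ψ φ unitDisk unitDisk := by
  obtain ⟨θ, a, ha, hφ⟩ := hφ
  have hexp : exp ((-θ : ℝ) * I) * exp (θ * I) = 1 := by
    rw [← Complex.exp_add]
    simp
  have hnorm (x : ℝ) := norm_exp_ofReal_mul_I x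
  have hψ (z : ℂ) : exp ((-θ : ℝ) * I) * mobius (exp (θ * I) * a) z =
      mobius a (exp ((-θ : ℝ) * I) * z) := by
    rw [← mobius_mul_of_norm_eq_one (hnorm (-θ)), ← mul_assoc, hexp, one_mul]
  refine ⟨fun z => exp ((-θ : ℝ) * I) * mobius (exp (θ * I) * a) z,
    ⟨-θ, exp (θ * I) * a, ?_, fun _ => rfl⟩, fun z hz => ?_, fun z hz => ?_⟩
  · simpa [unitDisk, hnorm] using ha
  · beta_reduce
    rw [hψ, hφ, ← mul_assoc, hexp, one_mul,
      mobius_mobius (mem_ball_zero_iff.1 ha) (mem_ball_zero_iff.1 hz)]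
  · have hz' : ‖exp ((-θ : ℝ) * I) * z‖ < 1 := by
      rw [norm_mul, hnorm, one_mul]
      exact mem_ball_zero_iff.1 hz
    beta_reduce
    rw [hφ, hψ, mobius_mobius (mem_ball_zero_iff.1 ha) hz', ← mul_assoc, mul_comm (exp (θ * I)),
      hexp, one_mul]

lemma PolyGrowth.exists_repComp {w : ℕ → ℝ} (hw : PolyGrowth w) (hφ : IsDiskAut φ) :
    ∃ T : H2 →L[ℂ] H2, RepComp (betaSeq w) φ T := by
  obtain ⟨θ, a, ha, hφ⟩ := hφ
  rw [funext hφ]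
  exact hw.exists_repComp_mul_mobius (norm_exp_ofReal_mul_I θ).le ha

lemma RepComp.leftInverse {β : ℕ → ℝ} (hβ0 : ∀ k, β k ≠ 0)
    (hβ : ∀ z ∈ unitDisk, Memℓp (pointKernel β z) 2) {ψ : ℂ → ℂ}
    (hψ : Set.MapsTo ψ unitDisk unitDisk) (hinv : Set.LeftInvOn φ ψ unitDisk)
    {S T : H2 →L[ℂ] H2} (hS : RepComp β ψ S) (hT : RepComp β φ T) :
    Function.LeftInverse S T := fun a =>
  eq_of_repFun_eq hβ0 hβ fun z hz => by rw [hS _ z hz, hT _ _ (hψ hz), hinv hz]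

lemma PolyGrowth.exists_repComp_equiv {w : ℕ → ℝ} (hw : PolyGrowth w) (hφ : IsDiskAut φ) :
    ∃ X : H2 ≃L[ℂ] H2, RepComp (betaSeq w) φ (X : H2 →L[ℂ] H2) := by
  have hβ0 (k : ℕ) : betaSeq w k ≠ 0 := (betaSeq_pos hw.1 k).ne'
  have hβ (z : ℂ) (hz : z ∈ unitDisk) := memℓp_pointKernel_betaSeq hw.1 hw.2.1 hz
  obtain ⟨ψ, hψ, hinv⟩ := hφ.exists_invOn
  obtain ⟨T, hT⟩ := hw.exists_repComp hφ
  obtain ⟨S, hS⟩ := hw.exists_repComp hψ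
  exact ⟨.equivOfInverse T S (hS.leftInverse hβ0 hβ hψ.mapsTo hinv.2 hT)
    (hT.leftInverse hβ0 hβ hφ.mapsTo hinv.1 hS), hT⟩

lemma RepComp.repMul_conj {β : ℕ → ℝ} {X : H2 ≃L[ℂ] H2} (hX : RepComp β φ (X : H2 →L[ℂ] H2))
    (hφ : Set.MapsTo φ unitDisk unitDisk) {g : ℂ → ℂ} {T : H2 →L[ℂ] H2} (hT : RepMul β g T) :
    RepMul β (g ∘ φ) ((X : H2 →L[ℂ] H2) ∘L T ∘L (X.symm : H2 →L[ℂ] H2)) := fun a z hz => by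
  calc repFun β (X (T (X.symm a))) z
      = g (φ z) * repFun β (X.symm a) (φ z) := by
        rw [← hT _ _ (hφ hz)]
        exact hX _ z hz
    _ = g (φ z) * repFun β a z := by
        rw [← hX _ z hz, ContinuousLinearEquiv.coe_coe, X.apply_symm_apply]

end DiskAutomorphisms

/-- On a weighted Hardy space `H²_β` of polynomial growth, for any
`φ ∈ Aut(𝔻)` the composition operator `C_φ` is a bounded invertible operator on
`H²_β`; consequently `M_z` is similar to `M_φ` on `H²_β`. -/
theorem statement0 (w : ℕ → ℝ) (hw : PolyGrowth w) (φ : ℂ → ℂ) (hφ : IsDiskAut φ) :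
    (∃ X : H2 ≃L[ℂ] H2, RepComp (betaSeq w) φ (X : H2 →L[ℂ] H2)) ∧
    ∃ Tz Tφ : H2 →L[ℂ] H2,
      RepMul (betaSeq w) (fun z => z) Tz ∧ RepMul (betaSeq w) φ Tφ ∧
        ∃ Y : H2 ≃L[ℂ] H2, ∀ a : H2, Y (Tz a) = Tφ (Y a) := by
  obtain ⟨X, hX⟩ := hw.exists_repComp_equiv hφ
  obtain ⟨Tz, hTz⟩ := exists_repMul_id hw.1 hw.2.1
  have hTφ : RepMul (betaSeq w) φ ((X : H2 →L[ℂ] H2) ∘L Tz ∘L (X.symm : H2 →L[ℂ] H2)) :=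
    hX.repMul_conj hφ.mapsTo hTz
  refine ⟨⟨X, hX⟩, Tz, _, hTz, hTφ, X, fun a => ?_⟩
  rw [ContinuousLinearMap.comp_apply, ContinuousLinearMap.comp_apply,
    ContinuousLinearEquiv.coe_coe, ContinuousLinearEquiv.coe_coe, X.symm_apply_apply]
end
end

section
/- Let H²_β be a weighted Hardy space of polynomial growth, and let B be a finite Blaschke product of order m on 𝔻. Then the multiplication operator M_B on H²_β is similar to the direct sum of m copies of M_z acting on the direct sum of m copies of H²_β. -/
noncomputable section

open Complex Filter Topology

/-!
Repeat the zeros of `B` periodically and form the Takenaka–Malmquist orthonormal basis `e k` of the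
unweighted Hardy space. Periodicity gives `e (n * m + i) = B ^ n * e i`, so the isometries `A i`
sending `z ^ n` to `e (n * m + i)`, for `i < m`, satisfy the Cuntz relations and
`A i f = e i * (f ∘ B)`.

Every `e k` is analytic beyond the closed disk. Cauchy's estimates on a circle inside and a circle
outside the unit circle show that the matrix of `A i` decays geometrically outside a cone
`n / K ≤ j ≤ K * n`. Inside the cone only boundedly many dyadic blocks of rows meet a given column,
and a doubling weight is constant up to a factor on these. Hence conjugating `A i` and its adjoint
by `diag β` yields bounded operators `X i` and `Y i`, which inherit the Cuntz relations and
`X i f = e i * (f ∘ B)`. The row of the `X i` is therefore an isomorphism from `m` copies of `H²_β`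
onto `H²_β`, and it intertwines the direct sum of the `M_z` with `M_B`.
-/

section SequenceSpace

open scoped lp

variable {ι κ 𝕜 : Type*} [RCLike 𝕜]

lemma hasSum_norm_sq (x : ℓ²(ι, 𝕜)) : HasSum (fun i => ‖x i‖ ^ 2) (‖x‖ ^ 2) := by
  simpa using lp.hasSum_norm (p := 2) (by simp) x

lemma sum_norm_sq_le_norm_sq (x : ℓ²(ι, 𝕜)) (s : Finset ι) : ∑ i ∈ s, ‖x i‖ ^ 2 ≤ ‖x‖ ^ 2 :=
  sum_le_hasSum s (fun _ _ => sq_nonneg _) (hasSum_norm_sq x)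

lemma norm_le_of_forall_sum_norm_sq_le {x : ℓ²(ι, 𝕜)} {C : ℝ} (hC : 0 ≤ C)
    (h : ∀ s : Finset ι, ∑ i ∈ s, ‖x i‖ ^ 2 ≤ C ^ 2) : ‖x‖ ≤ C :=
  lp.norm_le_of_forall_sum_le (p := 2) (by simp) hC (by simpa using h)

variable [DecidableEq κ]

lemma single_eq_smul_single_one (n : κ) (c : 𝕜) :
    (lp.single 2 n c : ℓ²(κ, 𝕜)) = c • lp.single 2 n 1 := by
  rw [← lp.single_smul, smul_eq_mul, mul_one]

lemma hasSum_smul_single_one (x : ℓ²(κ, 𝕜)) :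
    HasSum (fun n => x n • (lp.single 2 n 1 : ℓ²(κ, 𝕜))) x := by
  simpa only [← single_eq_smul_single_one] using lp.hasSum_single (by simp) x

lemma norm_sum_smul_single_one_sq (s : Finset κ) (c : κ → 𝕜) :
    ‖∑ n ∈ s, c n • (lp.single 2 n 1 : ℓ²(κ, 𝕜))‖ ^ 2 = ∑ n ∈ s, ‖c n‖ ^ 2 := by
  simpa [← single_eq_smul_single_one] using
    lp.norm_sum_single (E := fun _ : κ => 𝕜) (p := 2) (by simp) c s

lemma inner_single_one_left (n : κ) (x : ℓ²(κ, 𝕜)) : inner 𝕜 (lp.single 2 n 1) x = x n := by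
  simp [lp.inner_single_left]

lemma clm_ext_single {F : Type*} [NormedAddCommGroup F] [NormedSpace 𝕜 F]
    {S T : ℓ²(κ, 𝕜) →L[𝕜] F} (h : ∀ n, S (lp.single 2 n 1) = T (lp.single 2 n 1)) : S = T := by
  ext x
  have hS := (hasSum_smul_single_one x).mapL S
  have hT := (hasSum_smul_single_one x).mapL T
  simp only [map_smul, h] at hS hT
  exact hS.unique hT

/-- The entry in row `j` and column `n` of the matrix of an operator between `ℓ²` spaces, with
respect to the standard bases. -/
def matrixEntry (T : ℓ²(κ, 𝕜) →L[𝕜] ℓ²(ι, 𝕜)) (j : ι) (n : κ) : 𝕜 := T (lp.single 2 n 1) j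

lemma ext_matrixEntry {S T : ℓ²(κ, 𝕜) →L[𝕜] ℓ²(ι, 𝕜)}
    (h : ∀ j n, matrixEntry S j n = matrixEntry T j n) : S = T :=
  clm_ext_single fun n => lp.ext (funext fun j => h j n)

lemma matrixEntry_adjoint [DecidableEq ι] (T : ℓ²(κ, 𝕜) →L[𝕜] ℓ²(ι, 𝕜)) (n : κ) (j : ι) :
    matrixEntry (ContinuousLinearMap.adjoint T) n j = star (matrixEntry T j n) := by
  unfold matrixEntry
  rw [← inner_single_one_left, ← inner_single_one_left, ContinuousLinearMap.adjoint_inner_right,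
    RCLike.star_def, inner_conj_symm]

lemma hasSum_apply_eq_matrixEntry_mul (T : ℓ²(κ, 𝕜) →L[𝕜] ℓ²(ι, 𝕜))
    (x : ℓ²(κ, 𝕜)) (j : ι) : HasSum (fun n => matrixEntry T j n * x n) (T x j) := by
  classical
  simpa [inner_single_one_left, matrixEntry, mul_comm] using
    ((hasSum_smul_single_one x).mapL T).mapL (innerSL 𝕜 (lp.single 2 j 1))

lemma apply_sum_smul_single_one (T : ℓ²(κ, 𝕜) →L[𝕜] ℓ²(ι, 𝕜)) (r : Finset κ) (c : κ → 𝕜)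
    (j : ι) : T (∑ n ∈ r, c n • lp.single 2 n 1) j = ∑ n ∈ r, matrixEntry T j n * c n := by
  rw [map_sum, lp.coeFn_sum, Finset.sum_apply]
  exact Finset.sum_congr rfl fun n _ => by
    rw [map_smul, lp.coeFn_smul, Pi.smul_apply, smul_eq_mul, mul_comm, matrixEntry]

/-- The scalar matrix `t` is the matrix of a bounded operator between `ℓ²` spaces. -/
def IsBoundedMatrix (t : ι → κ → 𝕜) : Prop :=
  ∃ T : ℓ²(κ, 𝕜) →L[𝕜] ℓ²(ι, 𝕜), ∀ j n, matrixEntry T j n = t j n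

lemma IsBoundedMatrix.add {s t : ι → κ → 𝕜} (hs : IsBoundedMatrix s) (ht : IsBoundedMatrix t) :
    IsBoundedMatrix fun j n => s j n + t j n := by
  obtain ⟨S, hS⟩ := hs
  obtain ⟨T, hT⟩ := ht
  exact ⟨S + T, fun j n => congrArg₂ (· + ·) (hS j n) (hT j n)⟩

lemma denseRange_linearCombination_single :
    DenseRange (Finsupp.linearCombination 𝕜 fun n : κ => (lp.single 2 n 1 : ℓ²(κ, 𝕜))) := by
  intro x
  refine mem_closure_of_tendsto (hasSum_smul_single_one x) (.of_forall fun s => ?_)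
  exact ⟨∑ n ∈ s, Finsupp.single n (x n), by simp [map_sum]⟩

lemma isBoundedMatrix_of_forall_sum_le {t : ι → κ → 𝕜} {C : ℝ} (hC : 0 ≤ C)
    (h : ∀ (s : Finset ι) (r : Finset κ) (x : κ → 𝕜),
      ∑ j ∈ s, ‖∑ n ∈ r, t j n * x n‖ ^ 2 ≤ C * ∑ n ∈ r, ‖x n‖ ^ 2) :
    IsBoundedMatrix t := by
  have memℓp_column (n : κ) : Memℓp (fun j => t j n) 2 :=
    memℓp_gen' (C := C) fun s => by simpa using h s {n} fun _ => 1
  let column (n : κ) : ℓ²(ι, 𝕜) := ⟨fun j => t j n, memℓp_column n⟩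
  let f : (κ →₀ 𝕜) →ₗ[𝕜] ℓ²(ι, 𝕜) := Finsupp.linearCombination 𝕜 column
  let e : (κ →₀ 𝕜) →ₗ[𝕜] ℓ²(κ, 𝕜) := Finsupp.linearCombination 𝕜 fun n => lp.single 2 n 1
  have norm_f_le (x : κ →₀ 𝕜) : ‖f x‖ ≤ √C * ‖e x‖ := by
    refine norm_le_of_forall_sum_norm_sq_le (by positivity) fun s => ?_
    have norm_e : ‖e x‖ ^ 2 = ∑ n ∈ x.support, ‖x n‖ ^ 2 := norm_sum_smul_single_one_sq _ _
    have f_apply (j : ι) : f x j = ∑ n ∈ x.support, t j n * x n := by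
      rw [Finsupp.linearCombination_apply, Finsupp.sum, lp.coeFn_sum, Finset.sum_apply]
      exact Finset.sum_congr rfl fun n _ => mul_comm _ _
    simpa only [mul_pow, Real.sq_sqrt hC, norm_e, f_apply] using h s x.support x
  refine ⟨f.extendOfNorm e, fun j n => ?_⟩
  have extend_eq := LinearMap.extendOfNorm_eq (f := f) (e := e)
    denseRange_linearCombination_single ⟨√C, norm_f_le⟩ (Finsupp.single n 1)
  simp only [e, f, Finsupp.linearCombination_single, one_smul] at extend_eq
  rw [matrixEntry, extend_eq]

lemma isBoundedMatrix_of_summable_norm_sq {t : ι → κ → 𝕜}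
    (ht : Summable fun p : ι × κ => ‖t p.1 p.2‖ ^ 2) : IsBoundedMatrix t := by
  refine isBoundedMatrix_of_forall_sum_le (C := ∑' p : ι × κ, ‖t p.1 p.2‖ ^ 2)
    (tsum_nonneg fun _ => sq_nonneg _) fun s r x => ?_
  have row_le (j : ι) :
      ‖∑ n ∈ r, t j n * x n‖ ^ 2 ≤ (∑ n ∈ r, ‖t j n‖ ^ 2) * ∑ n ∈ r, ‖x n‖ ^ 2 :=
    calc ‖∑ n ∈ r, t j n * x n‖ ^ 2 ≤ (∑ n ∈ r, ‖t j n‖ * ‖x n‖) ^ 2 := by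
          gcongr
          exact (norm_sum_le _ _).trans_eq (Finset.sum_congr rfl fun n _ => norm_mul _ _)
      _ ≤ _ := Finset.sum_mul_sq_le_sq_mul_sq _ _ _
  calc ∑ j ∈ s, ‖∑ n ∈ r, t j n * x n‖ ^ 2
      ≤ ∑ j ∈ s, (∑ n ∈ r, ‖t j n‖ ^ 2) * ∑ n ∈ r, ‖x n‖ ^ 2 :=
        Finset.sum_le_sum fun j _ => row_le j
    _ = (∑ p ∈ s ×ˢ r, ‖t p.1 p.2‖ ^ 2) * ∑ n ∈ r, ‖x n‖ ^ 2 := by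
        rw [← Finset.sum_mul, Finset.sum_product]
    _ ≤ _ := by
        gcongr
        exact ht.sum_le_tsum _ fun _ _ => sq_nonneg _

section BlockBand

variable {γ : Type*} [DecidableEq γ]

lemma sum_norm_sq_block_le (A : ℓ²(κ, 𝕜) →L[𝕜] ℓ²(ι, 𝕜)) {s : Finset ι} {r : Finset κ} {x : κ → 𝕜}
    {a : ι → 𝕜} {b : κ → 𝕜} {u L : ℝ} (ha : ∀ j ∈ s, ‖a j‖ ≤ u) (hu : 0 ≤ u)
    (hb : ∀ n ∈ r, u * ‖b n‖ ≤ L) :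
    ∑ j ∈ s, ‖∑ n ∈ r, a j * b n * matrixEntry A j n * x n‖ ^ 2 ≤
      (‖A‖ * L) ^ 2 * ∑ n ∈ r, ‖x n‖ ^ 2 := by
  set y : ℓ²(κ, 𝕜) := ∑ n ∈ r, (b n * x n) • lp.single 2 n 1
  have row_eq (j : ι) : ∑ n ∈ r, a j * b n * matrixEntry A j n * x n = a j * A y j := by
    rw [apply_sum_smul_single_one, Finset.mul_sum]
    exact Finset.sum_congr rfl fun n _ => by ring
  calc ∑ j ∈ s, ‖∑ n ∈ r, a j * b n * matrixEntry A j n * x n‖ ^ 2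
      = ∑ j ∈ s, ‖a j‖ ^ 2 * ‖A y j‖ ^ 2 := by simp only [row_eq, norm_mul, mul_pow]
    _ ≤ ∑ j ∈ s, u ^ 2 * ‖A y j‖ ^ 2 := by
        gcongr with j hj
        exact ha j hj
    _ ≤ u ^ 2 * (‖A‖ * ‖y‖) ^ 2 := by
        rw [← Finset.mul_sum]
        gcongr
        exact (sum_norm_sq_le_norm_sq _ _).trans (by gcongr; exact A.le_opNorm y)
    _ = ‖A‖ ^ 2 * ∑ n ∈ r, (u * ‖b n‖) ^ 2 * ‖x n‖ ^ 2 := by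
        simp only [mul_pow, y, norm_sum_smul_single_one_sq, norm_mul, mul_assoc, ← Finset.mul_sum]
        ring
    _ ≤ ‖A‖ ^ 2 * ∑ n ∈ r, L ^ 2 * ‖x n‖ ^ 2 := by
        gcongr with n hn
        exact hb n hn
    _ = _ := by rw [← Finset.mul_sum]; ring

lemma isBoundedMatrix_blockBand_mul (A : ℓ²(κ, 𝕜) →L[𝕜] ℓ²(ι, 𝕜)) {block : ι → γ}
    {near : κ → Finset γ} {M : ℕ} (hM : ∀ n, (near n).card ≤ M) {a : ι → 𝕜} {b : κ → 𝕜} {u : γ → ℝ}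
    {L : ℝ} (ha : ∀ j, ‖a j‖ ≤ u (block j)) (hu : ∀ c, 0 ≤ u c)
    (hb : ∀ n, ∀ c ∈ near n, u c * ‖b n‖ ≤ L) :
    IsBoundedMatrix fun j n => if block j ∈ near n then a j * b n * matrixEntry A j n else 0 := by
  refine isBoundedMatrix_of_forall_sum_le (C := (‖A‖ * L) ^ 2 * M) (by positivity) fun s r x => ?_
  have block_le (c : γ) :
      ∑ j ∈ s with block j = c,
        ‖∑ n ∈ r, (if block j ∈ near n then a j * b n * matrixEntry A j n else 0) * x n‖ ^ 2 ≤
      (‖A‖ * L) ^ 2 * ∑ n ∈ r with c ∈ near n, ‖x n‖ ^ 2 := by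
    have ha_block : ∀ j ∈ s.filter (block · = c), ‖a j‖ ≤ u c := fun j hj =>
      (Finset.mem_filter.1 hj).2 ▸ ha j
    refine le_of_eq_of_le (Finset.sum_congr rfl fun j hj => ?_) <|
      sum_norm_sq_block_le A ha_block (hu c) fun n hn => hb n c (Finset.mem_filter.1 hn).2
    simp only [(Finset.mem_filter.1 hj).2, ite_mul, zero_mul, Finset.sum_filter]
  have count_le (n : κ) : (((s.image block).filter (· ∈ near n)).card : ℝ) ≤ M :=
    mod_cast (Finset.card_le_card fun c hc => (Finset.mem_filter.1 hc).2).trans (hM n)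
  rw [← Finset.sum_fiberwise_of_maps_to fun j hj => Finset.mem_image_of_mem block hj]
  calc _ ≤ ∑ c ∈ s.image block, (‖A‖ * L) ^ 2 * ∑ n ∈ r with c ∈ near n, ‖x n‖ ^ 2 :=
        Finset.sum_le_sum fun c _ => block_le c
    _ = (‖A‖ * L) ^ 2 * ∑ n ∈ r, ((s.image block).filter (· ∈ near n)).card * ‖x n‖ ^ 2 := by
        simp only [← Finset.mul_sum, Finset.sum_filter]
        rw [Finset.sum_comm]
        simp only [← Finset.sum_filter, Finset.sum_const, nsmul_eq_mul]
    _ ≤ (‖A‖ * L) ^ 2 * ∑ n ∈ r, M * ‖x n‖ ^ 2 := by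
        exact mul_le_mul_of_nonneg_left (Finset.sum_le_sum fun n _ =>
          mul_le_mul_of_nonneg_right (count_le n) (sq_nonneg _)) (sq_nonneg _)
    _ = _ := by rw [← Finset.mul_sum, mul_assoc]

end BlockBand

end SequenceSpace

section DoublingWeight

/-- A positive weight on `ℕ` is doubling if its values at any two indices within a factor two of
each other are comparable, uniformly in the indices. The bound `2 * (n + 1)` makes `j` always
comparable to `(j - 1) / 2`. -/
structure IsDoublingWeight (β : ℕ → ℝ) : Prop where
  pos : ∀ n, 0 < β n
  exists_le_mul : ∃ L, ∀ n j, n ≤ j → j ≤ 2 * (n + 1) → β j ≤ L * β n ∧ β n ≤ L * β j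

/-- The index of the dyadic block `[2 ^ b - 1, 2 ^ (b + 1) - 1)` of natural numbers containing
`n`. -/
def dyadicIndex (n : ℕ) : ℕ := Nat.log 2 (n + 1)

lemma two_pow_dyadicIndex_le (n : ℕ) : 2 ^ dyadicIndex n ≤ n + 1 := Nat.pow_log_le_self 2 (by simp)

lemma succ_lt_two_pow_dyadicIndex_succ (n : ℕ) : n + 1 < 2 ^ (dyadicIndex n + 1) :=
  Nat.lt_pow_succ_log_self (by simp) _

lemma dyadicIndex_two_pow_sub_one (b : ℕ) : dyadicIndex (2 ^ b - 1) = b := by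
  rw [dyadicIndex, Nat.sub_add_cancel Nat.one_le_two_pow, Nat.log_pow (by simp)]

lemma dyadicIndex_half {j : ℕ} (hj : j ≠ 0) : dyadicIndex ((j - 1) / 2) = dyadicIndex j - 1 := by
  rw [dyadicIndex, dyadicIndex, ← Nat.log_div_base]
  congr 1
  omega

lemma ne_zero_of_dyadicIndex_pos {j : ℕ} (hj : 0 < dyadicIndex j) : j ≠ 0 := by
  rintro rfl
  simp [dyadicIndex] at hj

lemma mul_le_of_dyadicIndex_add_lt {N j n : ℕ} (h : dyadicIndex n + N < dyadicIndex j) :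
    N * n ≤ j := by
  have : N * (n + 1) ≤ j + 1 :=
    calc N * (n + 1) ≤ 2 ^ N * 2 ^ (dyadicIndex n + 1) :=
          Nat.mul_le_mul Nat.lt_two_pow_self.le (succ_lt_two_pow_dyadicIndex_succ n).le
      _ = 2 ^ (dyadicIndex n + N + 1) := by ring
      _ ≤ 2 ^ dyadicIndex j := Nat.pow_le_pow_right (by simp) h
      _ ≤ j + 1 := two_pow_dyadicIndex_le j
  rcases N.eq_zero_or_pos with rfl | hN
  · simp
  · rw [mul_add] at this
    omega

namespace IsDoublingWeight

variable {β : ℕ → ℝ}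

lemma one : IsDoublingWeight 1 := ⟨fun _ => one_pos, 1, fun _ _ _ _ => by simp⟩

lemma inv (hβ : IsDoublingWeight β) : IsDoublingWeight β⁻¹ := by
  obtain ⟨hpos, L, hL⟩ := hβ
  have inv_le {x y : ℝ} (hx : 0 < x) (hy : 0 < y) (h : x ≤ L * y) : y⁻¹ ≤ L * x⁻¹ := by
    rw [← div_eq_mul_inv, le_div_iff₀ hx, ← div_eq_inv_mul, div_le_iff₀ hy]
    exact h
  exact ⟨fun n => inv_pos.2 (hpos n), L, fun n j hnj hjn =>
    ⟨inv_le (hpos n) (hpos j) (hL n j hnj hjn).2, inv_le (hpos j) (hpos n) (hL n j hnj hjn).1⟩⟩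

lemma exists_le_pow_mul (hβ : IsDoublingWeight β) :
    ∃ L, 1 ≤ L ∧ ∀ N j n, dyadicIndex j ≤ dyadicIndex n + N → dyadicIndex n ≤ dyadicIndex j + N →
      β j ≤ L ^ (N + 1) * β n := by
  obtain ⟨hpos, L, hL⟩ := hβ
  have one_le : 1 ≤ L := by simpa [hpos 0] using (hL 0 0 le_rfl (by simp)).1
  refine ⟨L, one_le, fun N => ?_⟩
  induction N with
  | zero =>
    intro j n hjn hnj
    have eq_index : dyadicIndex j = dyadicIndex n := by omega
    have hj := two_pow_dyadicIndex_le j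
    have hn := two_pow_dyadicIndex_le n
    have hj' := succ_lt_two_pow_dyadicIndex_succ j
    have hn' := succ_lt_two_pow_dyadicIndex_succ n
    rw [eq_index] at hj hj'
    rw [pow_succ] at hj' hn'
    rw [zero_add, pow_one]
    rcases le_total n j with h | h
    · exact (hL n j h (by omega)).1
    · exact (hL j n h (by omega)).2
  | succ N ih =>
    intro j n hjn hnj
    rcases hjn.eq_or_lt with hj | hjn
    · have hj0 : j ≠ 0 := ne_zero_of_dyadicIndex_pos (by omega)
      have index_half := dyadicIndex_half hj0
      calc β j ≤ L * β ((j - 1) / 2) := (hL _ j (by omega) (by omega)).1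
        _ ≤ L * (L ^ (N + 1) * β n) := by gcongr; exact ih _ _ (by omega) (by omega)
        _ = _ := by ring
    rcases hnj.eq_or_lt with hn | hnj
    · have hn0 : n ≠ 0 := ne_zero_of_dyadicIndex_pos (by omega)
      have index_half := dyadicIndex_half hn0
      calc β j ≤ L ^ (N + 1) * β ((n - 1) / 2) := ih _ _ (by omega) (by omega)
        _ ≤ L ^ (N + 1) * (L * β n) := by gcongr; exact (hL _ n (by omega) (by omega)).2
        _ = _ := by ring
    · have := (hpos n).le
      calc β j ≤ L ^ (N + 1) * β n := ih _ _ (by omega) (by omega)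
        _ ≤ L ^ (N + 1 + 1) * β n := by gcongr; simp

end IsDoublingWeight

lemma exists_pow_dyadicIndex_le (L : ℝ) (hL : 0 ≤ L) {σ : ℝ} (hσ : 1 < σ) :
    ∃ C, ∀ j, L ^ dyadicIndex j ≤ C * σ ^ j := by
  obtain ⟨K, hK⟩ := pow_unbounded_of_one_lt L one_lt_two
  obtain ⟨C, hC⟩ := (tendsto_pow_const_div_const_pow_of_one_lt K hσ).bddAbove_range
  refine ⟨C * σ, fun j => ?_⟩
  have hj := hC ⟨j + 1, rfl⟩
  rw [div_le_iff₀ (by positivity)] at hj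
  calc L ^ dyadicIndex j ≤ ((2 : ℝ) ^ K) ^ dyadicIndex j := by gcongr
    _ = ((2 : ℝ) ^ dyadicIndex j) ^ K := by rw [← pow_mul, ← pow_mul, mul_comm]
    _ ≤ ((j + 1 : ℕ) : ℝ) ^ K := by gcongr; exact_mod_cast two_pow_dyadicIndex_le j
    _ ≤ C * σ ^ (j + 1) := hj
    _ = _ := by ring

lemma IsDoublingWeight.exists_le_pow {β : ℕ → ℝ} (hβ : IsDoublingWeight β) {σ : ℝ} (hσ : 1 < σ) :
    ∃ C, ∀ j, β j ≤ C * σ ^ j := by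
  obtain ⟨L, hL, hβL⟩ := hβ.exists_le_pow_mul
  obtain ⟨C, hC⟩ := exists_pow_dyadicIndex_le L (by linarith) hσ
  refine ⟨L * β 0 * C, fun j => ?_⟩
  have := (hβ.pos 0).le
  calc β j ≤ L ^ (dyadicIndex j + 1) * β 0 := hβL _ _ _ (by simp) (by simp [dyadicIndex])
    _ = L * β 0 * L ^ dyadicIndex j := by ring
    _ ≤ L * β 0 * (C * σ ^ j) := by gcongr; exact hC j
    _ = _ := by ring

end DoublingWeight

namespace PolyGrowth

variable {w : ℕ → ℝ}

lemma betaSeq_pos (hw : PolyGrowth w) (n : ℕ) : 0 < betaSeq w n :=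
  Finset.prod_pos fun k hk => hw.1 k (Finset.mem_Icc.1 hk).1

lemma exists_abs_log_le (hw : PolyGrowth w) : ∃ C, ∀ k, |Real.log (w k)| ≤ C * ((k : ℝ) + 1)⁻¹ := by
  obtain ⟨-, hlim, M, hM⟩ := hw
  have log_isBigO : (fun k => Real.log (w k)) =O[atTop] fun k => w k - 1 := by
    simpa [Function.comp_def] using (Real.hasDerivAt_log one_ne_zero).isBigO_sub.comp_tendsto hlim
  have sub_isBigO : (fun k => w k - 1) =O[atTop] fun k : ℕ => ((k : ℝ) + 1)⁻¹ := by
    refine Asymptotics.IsBigO.of_bound M ((eventually_ge_atTop 1).mono fun k hk => ?_)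
    rw [norm_inv, Real.norm_eq_abs, Real.norm_of_nonneg (by positivity), ← div_eq_mul_inv,
      le_div_iff₀ (by positivity), mul_comm]
    exact hM k hk
  obtain ⟨C, -, hC⟩ := Asymptotics.bound_of_isBigO_nat_atTop (log_isBigO.trans sub_isBigO)
  exact ⟨C, fun k => (hC (by positivity)).trans_eq <| by
    rw [norm_inv, Real.norm_of_nonneg (by positivity)]⟩

lemma exists_abs_log_betaSeq_sub_le (hw : PolyGrowth w) :
    ∃ C, ∀ n j, n ≤ j → j ≤ 2 * (n + 1) →
      |Real.log (betaSeq w j) - Real.log (betaSeq w n)| ≤ C := by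
  obtain ⟨C, hC⟩ := hw.exists_abs_log_le
  have hC0 : 0 ≤ C := by simpa using (abs_nonneg _).trans (hC 0)
  refine ⟨C, fun n j hnj hjn => ?_⟩
  have log_betaSeq (n : ℕ) : Real.log (betaSeq w n) = ∑ k ∈ Finset.Ioc 0 n, Real.log (w k) :=
    Real.log_prod fun k hk => (hw.1 k (Finset.mem_Icc.1 hk).1).ne'
  have sum_split := Finset.sum_Ioc_consecutive (fun k => Real.log (w k)) n.zero_le hnj
  rw [log_betaSeq, log_betaSeq, ← sum_split, add_sub_cancel_left]
  calc |∑ k ∈ Finset.Ioc n j, Real.log (w k)| ≤ ∑ k ∈ Finset.Ioc n j, |Real.log (w k)| :=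
        Finset.abs_sum_le_sum_abs _ _
    _ ≤ ∑ _k ∈ Finset.Ioc n j, C * ((n : ℝ) + 2)⁻¹ := by
        refine Finset.sum_le_sum fun k hk => (hC k).trans ?_
        have : (n : ℝ) + 2 ≤ k + 1 := mod_cast Nat.succ_le_succ (Finset.mem_Ioc.1 hk).1
        exact mul_le_mul_of_nonneg_left (inv_anti₀ (by positivity) this) hC0
    _ = ((j - n : ℕ) : ℝ) * ((n : ℝ) + 2)⁻¹ * C := by
        rw [Finset.sum_const, Nat.card_Ioc, nsmul_eq_mul]
        ring
    _ ≤ C := by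
        refine mul_le_of_le_one_left hC0 (mul_inv_le_one_of_le₀ ?_ (by positivity))
        exact_mod_cast (by omega : j - n ≤ n + 2)

lemma isDoublingWeight (hw : PolyGrowth w) : IsDoublingWeight (betaSeq w) := by
  obtain ⟨C, hC⟩ := hw.exists_abs_log_betaSeq_sub_le
  have le_exp_mul {x y : ℝ} (hx : 0 < x) (hy : 0 < y) (h : Real.log x - Real.log y ≤ C) :
      x ≤ Real.exp C * y := by
    rwa [← Real.log_le_log_iff hx (by positivity), Real.log_mul (Real.exp_ne_zero _) hy.ne',
      Real.log_exp, ← sub_le_iff_le_add]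
  refine ⟨hw.betaSeq_pos, Real.exp C, fun n j hnj hjn => ?_⟩
  obtain ⟨h₁, h₂⟩ := abs_sub_le_iff.1 (hC n j hnj hjn)
  exact ⟨le_exp_mul (hw.betaSeq_pos j) (hw.betaSeq_pos n) h₁,
    le_exp_mul (hw.betaSeq_pos n) (hw.betaSeq_pos j) h₂⟩

end PolyGrowth

section DiagonalConjugation

open scoped lp

variable {ι 𝕜 : Type*} [RCLike 𝕜] [DecidableEq ι] {d : ι → 𝕜} {S S' T T' : ℓ²(ι, 𝕜) →L[𝕜] ℓ²(ι, 𝕜)}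

/-- `T'` is the conjugate `D T D⁻¹` of `T` by the possibly unbounded diagonal operator `D` with
diagonal `d`. It is expressed on matrix entries as `T' D = D T`. -/
def IsDiagConj (d : ι → 𝕜) (T T' : ℓ²(ι, 𝕜) →L[𝕜] ℓ²(ι, 𝕜)) : Prop :=
  ∀ j n, matrixEntry T' j n * d n = d j * matrixEntry T j n

namespace IsDiagConj

lemma zero : IsDiagConj d 0 0 := fun j n => by simp [matrixEntry]

lemma one : IsDiagConj d 1 1 := fun j n => by
  simp only [matrixEntry, one_apply_eq_self, lp.single_apply, Pi.single_apply]
  split_ifs with h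
  · rw [h, mul_comm]
  · simp

lemma add (hS : IsDiagConj d S S') (hT : IsDiagConj d T T') : IsDiagConj d (S + T) (S' + T') :=
  fun j n => by
    have entry_add (S T : ℓ²(ι, 𝕜) →L[𝕜] ℓ²(ι, 𝕜)) :
        matrixEntry (S + T) j n = matrixEntry S j n + matrixEntry T j n := rfl
    rw [entry_add, entry_add, add_mul, mul_add, hS, hT]

lemma sum {σ : Type*} {s : Finset σ} {T T' : σ → ℓ²(ι, 𝕜) →L[𝕜] ℓ²(ι, 𝕜)}
    (h : ∀ i ∈ s, IsDiagConj d (T i) (T' i)) : IsDiagConj d (∑ i ∈ s, T i) (∑ i ∈ s, T' i) := by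
  classical
  induction s using Finset.induction_on with
  | empty => simpa only [Finset.sum_empty] using zero
  | insert i s hi ih =>
    rw [Finset.sum_insert hi, Finset.sum_insert hi]
    exact (h i (s.mem_insert_self i)).add (ih fun k hk => h k (Finset.mem_insert_of_mem hk))

lemma comp (hS : IsDiagConj d S S') (hT : IsDiagConj d T T') :
    IsDiagConj d (S ∘L T) (S' ∘L T') := fun j n => by
  have hasSum_entry (S T : ℓ²(ι, 𝕜) →L[𝕜] ℓ²(ι, 𝕜)) :
      HasSum (fun l => matrixEntry S j l * matrixEntry T l n) (matrixEntry (S ∘L T) j n) :=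
    hasSum_apply_eq_matrixEntry_mul S _ j
  refine ((hasSum_entry S' T').mul_right (d n)).unique ?_
  convert (hasSum_entry S T).mul_left (d j) using 2 with l
  rw [mul_assoc, hT, ← mul_assoc, hS, mul_assoc]

lemma unique (hd : ∀ i, d i ≠ 0) (h : IsDiagConj d T S) (h' : IsDiagConj d T S') : S = S' :=
  ext_matrixEntry fun j n => mul_right_cancel₀ (hd n) ((h j n).trans (h' j n).symm)

end IsDiagConj

lemma exists_isDiagConj_of_isBoundedMatrix (hd : ∀ i, d i ≠ 0)
    (h : IsBoundedMatrix fun j n => d j * (d n)⁻¹ * matrixEntry T j n) :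
    ∃ T', IsDiagConj d T T' := by
  obtain ⟨T', hT'⟩ := h
  refine ⟨T', fun j n => ?_⟩
  rw [hT']
  field_simp [hd n]

end DiagonalConjugation

section ConeLocalization

open scoped lp

variable {𝕜 : Type*} [RCLike 𝕜] {T : ℓ²(ℕ, 𝕜) →L[𝕜] ℓ²(ℕ, 𝕜)}

/-- The matrix of `T` is geometrically small outside a cone `n / K ≤ j ≤ K * n`: each entry grows
at most geometrically along one index while decaying geometrically along the other. -/
def IsConeLocalized (T : ℓ²(ℕ, 𝕜) →L[𝕜] ℓ²(ℕ, 𝕜)) : Prop :=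
  ∃ C P q : ℝ, 0 < P ∧ 0 < q ∧ q < 1 ∧ ∀ j n,
    ‖matrixEntry T j n‖ ≤ C * (P ^ n * q ^ j) ∧ ‖matrixEntry T j n‖ ≤ C * (P ^ j * q ^ n)

lemma IsConeLocalized.adjoint (hT : IsConeLocalized T) :
    IsConeLocalized (ContinuousLinearMap.adjoint T) := by
  obtain ⟨C, P, q, hP, hq₀, hq₁, h⟩ := hT
  refine ⟨C, P, q, hP, hq₀, hq₁, fun j n => ?_⟩
  rw [matrixEntry_adjoint, norm_star]
  exact (h n j).symm

lemma IsConeLocalized.of_matrixEntry_eq {S T : ℓ²(ℕ, 𝕜) →L[𝕜] ℓ²(ℕ, 𝕜)}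
    (hT : IsConeLocalized T) {m i : ℕ} (hm : 0 < m)
    (hS : ∀ j n, matrixEntry S j n = matrixEntry T j (n * m + i)) :
    IsConeLocalized S := by
  obtain ⟨C, P, q, hP, hq₀, hq₁, h⟩ := hT
  have hC : 0 ≤ C := by simpa using (norm_nonneg _).trans (h 0 0).1
  refine ⟨C * max (P ^ i) 1, max (P ^ m) P, q, by positivity, hq₀, hq₁, fun j n => ?_⟩
  rw [hS]
  constructor
  · calc _ ≤ C * (P ^ (n * m + i) * q ^ j) := (h j _).1
      _ = C * P ^ i * ((P ^ m) ^ n * q ^ j) := by ring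
      _ ≤ _ := by gcongr <;> exact le_max_left _ _
  · calc _ ≤ C * (P ^ j * q ^ (n * m + i)) := (h j _).2
      _ ≤ C * (P ^ j * q ^ n) := by
        gcongr 2
        exact pow_le_pow_of_le_one hq₀.le hq₁.le
          ((Nat.le_mul_of_pos_right n hm).trans (Nat.le_add_right _ _))
      _ = C * 1 * (P ^ j * q ^ n) := by rw [mul_one]
      _ ≤ _ := by gcongr <;> exact le_max_right _ _

lemma exists_pow_mul_pow_le_of_mul_le {P q : ℝ} (hP : 0 < P) (hq₀ : 0 < q) (hq₁ : q < 1) :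
    ∃ K : ℕ, ∃ ρ, 0 < ρ ∧ ρ < 1 ∧ ∀ j n, K * n ≤ j → P ^ n * q ^ j ≤ ρ ^ j * ρ ^ n := by
  have hρ₀ : 0 < √q := Real.sqrt_pos.2 hq₀
  have hρ₁ : √q < 1 := by rwa [Real.sqrt_lt' one_pos, one_pow]
  obtain ⟨K, hK⟩ := exists_pow_lt_of_lt_one (div_pos hρ₀ hP) hρ₁
  rw [lt_div_iff₀ hP] at hK
  refine ⟨K, √q, hρ₀, hρ₁, fun j n hj => ?_⟩
  calc P ^ n * q ^ j = √q ^ j * (P ^ n * √q ^ j) := by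
        nth_rw 1 [← Real.mul_self_sqrt hq₀.le]
        ring
    _ ≤ √q ^ j * (P ^ n * √q ^ (K * n)) := by
        gcongr ?_ * (?_ * ?_)
        exact pow_le_pow_of_le_one hρ₀.le hρ₁.le hj
    _ = √q ^ j * (√q ^ K * P) ^ n := by ring
    _ ≤ √q ^ j * √q ^ n := by gcongr

lemma IsConeLocalized.exists_norm_le (hT : IsConeLocalized T) :
    ∃ (C : ℝ) (K : ℕ) (ρ : ℝ), 0 < ρ ∧ ρ < 1 ∧ ∀ j n, K * n ≤ j ∨ K * j ≤ n →
      ‖matrixEntry T j n‖ ≤ C * (ρ ^ j * ρ ^ n) := by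
  obtain ⟨C, P, q, hP, hq₀, hq₁, h⟩ := hT
  have hC : 0 ≤ C := by simpa using (norm_nonneg _).trans (h 0 0).1
  obtain ⟨K, ρ, hρ₀, hρ₁, hρ⟩ := exists_pow_mul_pow_le_of_mul_le hP hq₀ hq₁
  refine ⟨C, K, ρ, hρ₀, hρ₁, ?_⟩
  rintro j n (hjn | hnj)
  · exact (h j n).1.trans (mul_le_mul_of_nonneg_left (hρ j n hjn) hC)
  · exact (h j n).2.trans (mul_le_mul_of_nonneg_left ((hρ n j hnj).trans_eq (mul_comm _ _)) hC)

variable {β : ℕ → ℝ}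

lemma IsDoublingWeight.isBoundedMatrix_near (hβ : IsDoublingWeight β)
    (T : ℓ²(ℕ, 𝕜) →L[𝕜] ℓ²(ℕ, 𝕜)) (K : ℕ) :
    IsBoundedMatrix fun j n =>
      if dyadicIndex j ∈ Finset.Icc (dyadicIndex n - K) (dyadicIndex n + K) then
        (β j : 𝕜) * (β n : 𝕜)⁻¹ * matrixEntry T j n else 0 := by
  obtain ⟨L, hL, hβL⟩ := hβ.exists_le_pow_mul
  have norm_ofReal_β (n : ℕ) : ‖(β n : 𝕜)‖ = β n := RCLike.norm_of_nonneg (hβ.pos n).le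
  refine isBoundedMatrix_blockBand_mul (M := 2 * K + 1) (u := fun c => L * β (2 ^ c - 1))
    (L := L * L ^ (K + 1)) T (fun n => ?_) (fun j => ?_) (fun c => ?_) (fun n c hc => ?_)
  · rw [Nat.card_Icc]
    omega
  · rw [norm_ofReal_β]
    simpa using hβL 0 j (2 ^ dyadicIndex j - 1) (by simp [dyadicIndex_two_pow_sub_one])
      (by simp [dyadicIndex_two_pow_sub_one])
  · have := hβ.pos (2 ^ c - 1)
    positivity
  · rw [Finset.mem_Icc] at hc
    have := hβL K (2 ^ c - 1) n (by rw [dyadicIndex_two_pow_sub_one]; omega)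
      (by rw [dyadicIndex_two_pow_sub_one]; omega)
    rw [norm_inv, norm_ofReal_β, ← div_eq_mul_inv, div_le_iff₀ (hβ.pos n), mul_assoc]
    gcongr

lemma isBoundedMatrix_of_norm_le_geometric {t : ℕ → ℕ → 𝕜} {C τ : ℝ} (hτ₀ : 0 ≤ τ) (hτ₁ : τ < 1)
    (ht : ∀ j n, ‖t j n‖ ≤ C * (τ ^ j * τ ^ n)) : IsBoundedMatrix t := by
  refine isBoundedMatrix_of_summable_norm_sq (.of_nonneg_of_le (fun _ => sq_nonneg _) (fun p =>
    pow_le_pow_left₀ (norm_nonneg _) (ht p.1 p.2) 2) ?_)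
  have summable_sq : Summable fun n : ℕ => (τ ^ n) ^ 2 := by
    simp_rw [← pow_mul, mul_comm _ 2, pow_mul]
    exact summable_geometric_of_lt_one (sq_nonneg τ) (by nlinarith)
  simp_rw [mul_pow]
  exact (summable_sq.mul_of_nonneg summable_sq (fun _ => sq_nonneg _)
    (fun _ => sq_nonneg _)).mul_left _

lemma IsDoublingWeight.exists_norm_conj_le (hβ : IsDoublingWeight β) {ρ τ : ℝ} (hρ : 0 < ρ)
    (hρτ : ρ < τ) {t : ℕ → ℕ → 𝕜} {C : ℝ} {p : ℕ → ℕ → Prop}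
    (ht : ∀ j n, p j n → ‖t j n‖ ≤ C * (ρ ^ j * ρ ^ n)) :
    ∃ D, 0 ≤ D ∧ ∀ j n, p j n → ‖(β j : 𝕜) * (β n : 𝕜)⁻¹ * t j n‖ ≤ D * (τ ^ j * τ ^ n) := by
  have one_lt : 1 < τ / ρ := (one_lt_div hρ).2 hρτ
  obtain ⟨E, hE⟩ := hβ.exists_le_pow one_lt
  obtain ⟨F, hF⟩ := hβ.inv.exists_le_pow one_lt
  have norm_ofReal_β (n : ℕ) : ‖(β n : 𝕜)‖ = β n := RCLike.norm_of_nonneg (hβ.pos n).le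
  have hE₀ : 0 < E := (hβ.pos 0).trans_le (by simpa using hE 0)
  have hF₀ : 0 < F := (hβ.inv.pos 0).trans_le (by simpa using hF 0)
  refine ⟨E * F * |C|, by positivity, fun j n hjn => ?_⟩
  calc ‖(β j : 𝕜) * (β n : 𝕜)⁻¹ * t j n‖ = β j * (β n)⁻¹ * ‖t j n‖ := by
        rw [norm_mul, norm_mul, norm_inv, norm_ofReal_β, norm_ofReal_β]
    _ ≤ (E * (τ / ρ) ^ j) * (F * (τ / ρ) ^ n) * (|C| * (ρ ^ j * ρ ^ n)) := by
        have := (hβ.inv.pos n).le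
        have := hρ.trans hρτ
        gcongr
        · exact hE j
        · exact hF n
        · exact (ht j n hjn).trans (by gcongr; exact le_abs_self C)
    _ = _ := by rw [div_pow, div_pow]; field_simp

theorem IsConeLocalized.exists_isDiagConj (hT : IsConeLocalized T) (hβ : IsDoublingWeight β) :
    ∃ T', IsDiagConj (fun n => (β n : 𝕜)) T T' := by
  obtain ⟨C, K, ρ, hρ₀, hρ₁, hfar⟩ := hT.exists_norm_le
  obtain ⟨τ, hρτ, hτ₁⟩ := exists_between hρ₁
  obtain ⟨D, hD, hconj⟩ := hβ.exists_norm_conj_le hρ₀ hρτ hfar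
  have hτ₀ := (hρ₀.trans hρτ).le
  let near (n : ℕ) := Finset.Icc (dyadicIndex n - K) (dyadicIndex n + K)
  have isBoundedMatrix_far : IsBoundedMatrix fun j n =>
      if dyadicIndex j ∈ near n then 0 else (β j : 𝕜) * (β n : 𝕜)⁻¹ * matrixEntry T j n := by
    refine isBoundedMatrix_of_norm_le_geometric hτ₀ hτ₁ (C := D) fun j n => ?_
    split_ifs with h
    · rw [norm_zero]
      positivity
    · refine hconj j n ?_
      rw [Finset.mem_Icc, not_and_or, not_le, not_le] at h
      exact h.symm.imp mul_le_of_dyadicIndex_add_lt fun h => mul_le_of_dyadicIndex_add_lt (by omega)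
  refine exists_isDiagConj_of_isBoundedMatrix
    (fun n => RCLike.ofReal_ne_zero.2 (hβ.pos n).ne') ?_
  convert (hβ.isBoundedMatrix_near T K).add isBoundedMatrix_far using 3 with j n
  split_ifs <;> simp

end ConeLocalization

section Evaluation

open UnitDisc

lemma repFun_single (β : ℕ → ℝ) (n : ℕ) (x : ℂ) :
    repFun β (lp.single 2 n 1) x = x ^ n / β n := by
  rw [repFun, tsum_eq_single n fun k hk => by simp [hk]]
  simp [div_eq_mul_inv, mul_comm]

namespace IsDoublingWeight

variable {β : ℕ → ℝ}

lemma memℓp_pow_div (hβ : IsDoublingWeight β) (x : 𝔻) :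
    Memℓp (fun n => (x : ℂ) ^ n / (β n : ℂ)) 2 := by
  obtain ⟨s, hxs, hs₁⟩ := exists_between x.norm_lt_one
  have hs₀ : 0 < s := (norm_nonneg _).trans_lt hxs
  obtain ⟨C, hC⟩ := hβ.inv.exists_le_pow ((one_lt_inv₀ hs₀).2 hs₁)
  have hr₁ : ‖(x : ℂ)‖ * s⁻¹ < 1 := by rwa [← div_eq_mul_inv, div_lt_one hs₀]
  have norm_le (n : ℕ) : ‖(x : ℂ) ^ n / (β n : ℂ)‖ ≤ C * (‖(x : ℂ)‖ * s⁻¹) ^ n := by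
    rw [norm_div, norm_pow, Complex.norm_real, Real.norm_of_nonneg (hβ.pos n).le, div_eq_mul_inv,
      mul_pow, mul_left_comm]
    gcongr
    exact hC n
  refine memℓp_gen (.of_nonneg_of_le (fun n => by positivity) (fun n => ?_)
    ((summable_geometric_of_lt_one (by positivity) (pow_lt_one₀ (by positivity) hr₁
      two_ne_zero)).mul_left (C ^ 2)))
  simpa [mul_pow, ← pow_mul, mul_comm] using pow_le_pow_left₀ (norm_nonneg _) (norm_le n) 2

/-- The reproducing kernel of `H²_β` at a point `x` of the disk: the vector representing the
evaluation functional at `x`. -/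
def kernel (hβ : IsDoublingWeight β) (x : 𝔻) : H2 := star ⟨_, hβ.memℓp_pow_div x⟩

variable (hβ : IsDoublingWeight β) (x : 𝔻)

lemma kernel_apply (n : ℕ) : hβ.kernel x n = star ((x : ℂ) ^ n / (β n : ℂ)) := rfl

lemma hasSum_inner_kernel (a : H2) :
    HasSum (fun n => a n / (β n : ℂ) * (x : ℂ) ^ n) (inner ℂ (hβ.kernel x) a) := by
  convert! lp.hasSum_inner (𝕜 := ℂ) (hβ.kernel x) a using 2 with n
  rw [kernel_apply, RCLike.inner_apply, RCLike.star_def, RCLike.conj_conj]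
  ring

lemma inner_kernel (a : H2) : inner ℂ (hβ.kernel x) a = repFun β a x :=
  (hβ.hasSum_inner_kernel x a).tsum_eq.symm

/-- Evaluation at the point `x` of the disk, as a functional on the model of `H²_β`. -/
def evalCLM : H2 →L[ℂ] ℂ := innerSL ℂ (hβ.kernel x)

lemma evalCLM_apply (a : H2) : hβ.evalCLM x a = repFun β a x := hβ.inner_kernel x a

lemma evalCLM_single (n : ℕ) : hβ.evalCLM x (lp.single 2 n 1) = (x : ℂ) ^ n / β n := by
  rw [evalCLM_apply, repFun_single]

lemma norm_coeff_div_le (hβ : IsDoublingWeight β) {f : H2} {G : ℂ → ℂ} {R C : ℝ}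
    (hfG : ∀ x : 𝔻, repFun β f x = G x)
    (hR : 0 < R) (hG : DiffContOnCl ℂ G (Metric.ball 0 R))
    (hC : ∀ x ∈ Metric.sphere (0 : ℂ) R, ‖G x‖ ≤ C) (j : ℕ) : ‖f j / (β j : ℂ)‖ ≤ C / R ^ j := by
  have hasFPowerSeries : HasFPowerSeriesAt G
      (FormalMultilinearSeries.ofScalars ℂ fun n => f n / (β n : ℂ)) 0 := by
    rw [hasFPowerSeriesAt_iff]
    filter_upwards [Metric.ball_mem_nhds (0 : ℂ) one_pos] with x hx
    lift x to 𝔻 using mem_ball_zero_iff.1 hx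
    rw [zero_add, ← hfG, ← hβ.inner_kernel]
    simpa [FormalMultilinearSeries.coeff_ofScalars, mul_comm] using hβ.hasSum_inner_kernel x f
  obtain ⟨r, hr⟩ := hasFPowerSeries
  have cauchy := Complex.norm_iteratedDeriv_le_of_forall_mem_sphere_norm_le j hR hG hC
  rw [iteratedDeriv_eq_iteratedFDeriv, ← hr.factorial_smul (1 : ℂ) j,
    show FormalMultilinearSeries.ofScalars ℂ (fun n => f n / (β n : ℂ)) j (fun _ => (1 : ℂ)) =
      f j / (β j : ℂ) from FormalMultilinearSeries.coeff_ofScalars (n := j),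
    nsmul_eq_mul, norm_mul, Complex.norm_natCast, mul_div_assoc] at cauchy
  exact le_of_mul_le_mul_left cauchy (by positivity)

lemma eq_zero_of_forall_repFun_eq_zero (hβ : IsDoublingWeight β) {f : H2}
    (hf : ∀ x : 𝔻, repFun β f x = 0) : f = 0 := by
  ext j
  have coeff_le := hβ.norm_coeff_div_le hf one_pos diffContOnCl_const (C := 0) (by simp) j
  rw [zero_div, norm_le_zero_iff] at coeff_le
  simpa [(hβ.pos j).ne'] using coeff_le

end IsDoublingWeight

end Evaluation

section Isometry

open scoped lp
open UnitDisc

variable {𝕜 κ E : Type*} [RCLike 𝕜] [NormedAddCommGroup E] [InnerProductSpace 𝕜 E]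

lemma norm_smul_sub_map_eq (S : E →ₗᵢ[𝕜] E) (a : 𝕜) (g : E) :
    ‖a • g - S g‖ = ‖g - star a • S g‖ := by
  rw [← sq_eq_sq₀ (norm_nonneg _) (norm_nonneg _), @norm_sub_sq 𝕜, @norm_sub_sq 𝕜, inner_smul_left,
    inner_smul_right, norm_smul, norm_smul, S.norm_map, norm_star, RCLike.star_def]
  ring

variable [CompleteSpace E] [DecidableEq κ] {v : κ → E}

/-- The isometry of `ℓ²` into a Hilbert space sending the standard basis to an orthonormal family.
-/
def synthesis (hv : Orthonormal 𝕜 v) : ℓ²(κ, 𝕜) →ₗᵢ[𝕜] E := hv.orthogonalFamily.linearIsometry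

lemma synthesis_single (hv : Orthonormal 𝕜 v) (n : κ) : synthesis hv (lp.single 2 n 1) = v n := by
  simp [synthesis, OrthogonalFamily.linearIsometry_apply_single]

lemma orthonormal_single : Orthonormal 𝕜 fun n : κ => (lp.single 2 n 1 : ℓ²(κ, 𝕜)) := by
  rw [orthonormal_iff_ite]
  intro i j
  rw [inner_single_one_left, lp.single_apply, Pi.single_apply]

lemma matrixEntry_synthesis {ι : Type*} {v : κ → ℓ²(ι, 𝕜)} (hv : Orthonormal 𝕜 v) (j : ι) (n : κ) :
    matrixEntry (synthesis hv).toContinuousLinearMap j n = v n j :=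
  congrArg (· j) (synthesis_single hv n)

section BlaschkeFactor

variable {E : Type*} [NormedAddCommGroup E] [InnerProductSpace ℂ E] [CompleteSpace E]
  (S : E →ₗᵢ[ℂ] E) (c : Circle) (a : 𝔻)

lemma isUnit_one_sub_conj_smul :
    IsUnit (1 - star (a : ℂ) • S.toContinuousLinearMap : E →L[ℂ] E) := by
  refine isUnit_one_sub_of_norm_lt_one ?_
  calc ‖star (a : ℂ) • S.toContinuousLinearMap‖ ≤ ‖(a : ℂ)‖ * 1 := by
        rw [norm_smul, norm_star]
        gcongr
        exact S.norm_toContinuousLinearMap_le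
    _ < 1 := by simpa using a.norm_lt_one

/-- The Blaschke factor `c (a - S) (1 - conj a S)⁻¹` of an isometry `S`, which is again an
isometry. -/
def blaschkeFactor : E →ₗᵢ[ℂ] E where
  toLinearMap := ((c : ℂ) • ((a : ℂ) • 1 - S.toContinuousLinearMap)) ∘L
    Ring.inverse (1 - star (a : ℂ) • S.toContinuousLinearMap)
  norm_map' f := by
    have inverse_sub := congrArg (· f) (Ring.mul_inverse_cancel _ (isUnit_one_sub_conj_smul S a))
    set g := Ring.inverse (1 - star (a : ℂ) • S.toContinuousLinearMap) f
    change ‖(c : ℂ) • ((a : ℂ) • g - S g)‖ = ‖f‖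
    rw [norm_smul, Circle.norm_coe, one_mul, norm_smul_sub_map_eq]
    exact congrArg norm inverse_sub

lemma blaschkeFactor_sub_smul (g : E) :
    blaschkeFactor S c a (g - star (a : ℂ) • S g) = (c : ℂ) • ((a : ℂ) • g - S g) :=
  congrArg (fun g => (c : ℂ) • ((a : ℂ) • g - S g))
    (congrArg (· g) (Ring.inverse_mul_cancel _ (isUnit_one_sub_conj_smul S a)))

lemma exists_eq_sub_conj_smul (f : E) : ∃ g, f = g - star (a : ℂ) • S g :=
  ⟨_, (congrArg (· f) (Ring.mul_inverse_cancel _ (isUnit_one_sub_conj_smul S a))).symm⟩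

lemma adjoint_apply_of_adjoint_blaschkeFactor_eq_zero {h : E}
    (hh : ContinuousLinearMap.adjoint (blaschkeFactor S c a).toContinuousLinearMap h = 0) :
    ContinuousLinearMap.adjoint S.toContinuousLinearMap h = star (a : ℂ) • h := by
  refine ext_inner_left ℂ fun g => ?_
  have inner_eq_zero := ContinuousLinearMap.adjoint_inner_right
    (blaschkeFactor S c a).toContinuousLinearMap (g - star (a : ℂ) • S g) h
  rw [hh, inner_zero_right, LinearIsometry.coe_toContinuousLinearMap, blaschkeFactor_sub_smul,
    inner_smul_left, inner_sub_left, inner_smul_left, zero_eq_mul,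
    or_iff_right (by simp), sub_eq_zero] at inner_eq_zero
  rw [ContinuousLinearMap.adjoint_inner_right, inner_smul_right]
  exact inner_eq_zero.symm

end BlaschkeFactor

end Isometry

section HardySpace

open UnitDisc

/-- The forward shift on `ℓ²`, that is, multiplication by `z` on the Hardy space. -/
def shift : H2 →ₗᵢ[ℂ] H2 :=
  synthesis (orthonormal_single.comp (fun n : ℕ => n + 1) (add_left_injective 1))

lemma shift_single (n : ℕ) : shift (lp.single 2 n 1) = lp.single 2 (n + 1) 1 := synthesis_single _ n

/-- The Szegő kernel, the reproducing kernel of the Hardy space. -/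
def szegoKernel (a : 𝔻) : H2 := IsDoublingWeight.one.kernel a

lemma szegoKernel_apply (a : 𝔻) (n : ℕ) : szegoKernel a n = star (a : ℂ) ^ n := by
  simp [szegoKernel, IsDoublingWeight.kernel_apply]

lemma inner_szegoKernel (a : 𝔻) (f : H2) : inner ℂ (szegoKernel a) f = repFun 1 f a :=
  IsDoublingWeight.one.inner_kernel a f

lemma norm_conj_mul_lt_one_s1 (a x : 𝔻) : ‖star (a : ℂ) * x‖ < 1 := by
  rw [norm_mul, norm_star]
  exact mul_lt_one_of_nonneg_of_lt_one_left (norm_nonneg _) a.norm_lt_one x.norm_lt_one.le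

lemma one_sub_conj_mul_ne_zero_s1 (a x : 𝔻) : 1 - star (a : ℂ) * x ≠ 0 := fun h => by
  have norm_lt := norm_conj_mul_lt_one_s1 a x
  rw [← sub_eq_zero.1 h, norm_one] at norm_lt
  exact norm_lt.false

lemma repFun_szegoKernel (a x : 𝔻) : repFun 1 (szegoKernel a) x = (1 - star (a : ℂ) * x)⁻¹ := by
  simpa [repFun, szegoKernel_apply, mul_pow] using
    tsum_geometric_of_norm_lt_one (norm_conj_mul_lt_one_s1 a x)

lemma norm_szegoKernel_sq (a : 𝔻) : ‖szegoKernel a‖ ^ 2 = (1 - ‖(a : ℂ)‖ ^ 2)⁻¹ := by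
  have norm_sq := inner_self_eq_norm_sq_to_K (𝕜 := ℂ) (szegoKernel a)
  rw [inner_szegoKernel, repFun_szegoKernel, RCLike.star_def, RCLike.conj_mul] at norm_sq
  exact Complex.ofReal_injective (by push_cast; exact norm_sq.symm)

lemma norm_repFun_le (f : H2) (x : 𝔻) : ‖repFun 1 f x‖ ≤ ‖szegoKernel x‖ * ‖f‖ := by
  rw [← inner_szegoKernel]
  exact norm_inner_le_norm _ _

lemma repFun_shift (f : H2) (x : 𝔻) : repFun 1 (shift f) x = x * repFun 1 f x := by
  have eval_shift : IsDoublingWeight.one.evalCLM x ∘L shift.toContinuousLinearMap =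
      (x : ℂ) • IsDoublingWeight.one.evalCLM x := clm_ext_single fun n => by
    simp [shift_single, IsDoublingWeight.evalCLM_single, pow_succ']
  simpa [IsDoublingWeight.evalCLM_apply] using congrArg (· f) eval_shift

lemma repFun_blaschkeFactor_shift (c : Circle) (a : 𝔻) (f : H2) (x : 𝔻) :
    repFun 1 (blaschkeFactor shift c a f) x = c * mobius a x * repFun 1 f x := by
  obtain ⟨g, rfl⟩ := exists_eq_sub_conj_smul shift a f
  have eval_shift := repFun_shift g x
  have denom_ne_zero := one_sub_conj_mul_ne_zero_s1 a x
  rw [blaschkeFactor_sub_smul]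
  simp only [← IsDoublingWeight.one.evalCLM_apply, map_sub, map_smul, smul_eq_mul] at eval_shift ⊢
  rw [eval_shift, ← mul_assoc (star _), ← one_sub_mul, mul_assoc, mobius, ← RCLike.star_def,
    ← mul_assoc (_ / _), div_mul_cancel₀ _ denom_ne_zero, sub_mul]

lemma eq_smul_szegoKernel_of_adjoint_blaschkeFactor_eq_zero {c : Circle} {a : 𝔻} {h : H2}
    (hh : ContinuousLinearMap.adjoint (blaschkeFactor shift c a).toContinuousLinearMap h = 0) :
    h = h 0 • szegoKernel a := by
  have adjoint_shift := adjoint_apply_of_adjoint_blaschkeFactor_eq_zero shift c a hh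
  have coeff_succ (n : ℕ) : h (n + 1) = star (a : ℂ) * h n := by
    have inner_eq := congrArg (inner ℂ (lp.single 2 n 1 : H2)) adjoint_shift
    rwa [ContinuousLinearMap.adjoint_inner_right, LinearIsometry.coe_toContinuousLinearMap,
      shift_single, inner_smul_right, inner_single_one_left, inner_single_one_left] at inner_eq
  ext n
  rw [lp.coeFn_smul, Pi.smul_apply, smul_eq_mul, szegoKernel_apply]
  induction n with
  | zero => simp
  | succ n ih => rw [coeff_succ, ih]; ring

lemma mem_range_blaschkeFactor_of_repFun_eq_zero (c : Circle) {a : 𝔻} {f : H2}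
    (hf : repFun 1 f a = 0) : ∃ g, blaschkeFactor shift c a g = f := by
  set V := (blaschkeFactor shift c a).toContinuousLinearMap
  set h := f - V (ContinuousLinearMap.adjoint V f) with h_def
  have h_eq : h = h 0 • szegoKernel a := by
    refine eq_smul_szegoKernel_of_adjoint_blaschkeFactor_eq_zero (c := c) ?_
    have adjoint_comp := V.norm_map_iff_adjoint_comp_self.1 (blaschkeFactor shift c a).norm_map
    rw [h_def, map_sub, sub_eq_zero]
    exact (congrArg (· (ContinuousLinearMap.adjoint V f)) adjoint_comp).symm
  have inner_h : inner ℂ (szegoKernel a) h = 0 := by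
    rw [h_def, inner_sub_right, inner_szegoKernel, inner_szegoKernel, hf]
    exact sub_eq_zero.2 ((repFun_blaschkeFactor_shift c a _ a).trans (by simp [mobius])).symm
  have h_zero : h = 0 := by
    rw [← inner_self_eq_zero (𝕜 := ℂ)]
    nth_rw 1 [h_eq]
    rw [inner_smul_left, inner_h, mul_zero]
  exact ⟨_, (sub_eq_zero.1 h_zero).symm⟩

end HardySpace

section TakenakaMalmquist

open UnitDisc

/-- The Szegő kernel scaled to a unit vector. -/
def unitSzegoKernel (a : 𝔻) : H2 := (√(1 - ‖(a : ℂ)‖ ^ 2) : ℂ) • szegoKernel a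

lemma one_sub_norm_sq_pos (a : 𝔻) : 0 < 1 - ‖(a : ℂ)‖ ^ 2 :=
  sub_pos.2 (pow_lt_one₀ (norm_nonneg _) a.norm_lt_one two_ne_zero)

lemma norm_unitSzegoKernel (a : 𝔻) : ‖unitSzegoKernel a‖ = 1 := by
  rw [← sq_eq_sq₀ (norm_nonneg _) zero_le_one, unitSzegoKernel, norm_smul, mul_pow,
    norm_szegoKernel_sq, Complex.norm_real, Real.norm_of_nonneg (Real.sqrt_nonneg _),
    Real.sq_sqrt (one_sub_norm_sq_pos a).le, mul_inv_cancel₀ (one_sub_norm_sq_pos a).ne', one_pow]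

lemma repFun_unitSzegoKernel (a x : 𝔻) :
    repFun 1 (unitSzegoKernel a) x = √(1 - ‖(a : ℂ)‖ ^ 2) / (1 - star (a : ℂ) * x) := by
  rw [unitSzegoKernel, ← inner_szegoKernel, inner_smul_right, inner_szegoKernel, repFun_szegoKernel,
    div_eq_mul_inv]

lemma inner_unitSzegoKernel (a : 𝔻) (f : H2) :
    inner ℂ (unitSzegoKernel a) f = √(1 - ‖(a : ℂ)‖ ^ 2) * repFun 1 f a := by
  rw [unitSzegoKernel, inner_smul_left, inner_szegoKernel, Complex.conj_ofReal]

variable (c : ℕ → Circle) (z : ℕ → 𝔻)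

/-- The product of the first `N` terms of the sequence of Möbius factors with zeros `z` and
unimodular coefficients `c`. -/
def blaschkeProd (N : ℕ) (x : ℂ) : ℂ := ∏ k ∈ Finset.range N, c k * mobius (z k) x

/-- Multiplication by `blaschkeProd c z N` on the Hardy space. -/
def mulBlaschkeProd : ℕ → H2 →ₗᵢ[ℂ] H2
  | 0 => .id
  | N + 1 => (mulBlaschkeProd N).comp (blaschkeFactor shift (c N) (z N))

lemma repFun_mulBlaschkeProd (N : ℕ) (f : H2) (x : 𝔻) :
    repFun 1 (mulBlaschkeProd c z N f) x = blaschkeProd c z N x * repFun 1 f x := by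
  induction N generalizing f with
  | zero => simp [mulBlaschkeProd, blaschkeProd]
  | succ N ih =>
    rw [mulBlaschkeProd, LinearIsometry.coe_comp, Function.comp_apply, ih,
      repFun_blaschkeFactor_shift, blaschkeProd, blaschkeProd, Finset.prod_range_succ, ← mul_assoc]

/-- The `N`-th vector of the Takenaka–Malmquist system of the Hardy space with zeros `z`. -/
def takenakaMalmquistVec (N : ℕ) : H2 := mulBlaschkeProd c z N (unitSzegoKernel (z N))

/-- The rational function represented by `takenakaMalmquistVec c z N`, with value `0` at its
poles. -/
def takenakaMalmquistFun (N : ℕ) (x : ℂ) : ℂ :=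
  blaschkeProd c z N x * (√(1 - ‖(z N : ℂ)‖ ^ 2) / (1 - star (z N : ℂ) * x))

lemma repFun_takenakaMalmquistVec (N : ℕ) (x : 𝔻) :
    repFun 1 (takenakaMalmquistVec c z N) x = takenakaMalmquistFun c z N x := by
  rw [takenakaMalmquistVec, repFun_mulBlaschkeProd, repFun_unitSzegoKernel, takenakaMalmquistFun]

lemma exists_mulBlaschkeProd_eq_of_lt {M N : ℕ} (h : N < M) (f : H2) :
    ∃ g, mulBlaschkeProd c z M f = mulBlaschkeProd c z (N + 1) g := by
  induction M, h using Nat.le_induction generalizing f with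
  | base => exact ⟨f, rfl⟩
  | succ M _ ih => exact ih _

lemma inner_takenakaMalmquistVec_of_lt {M N : ℕ} (h : N < M) :
    inner ℂ (takenakaMalmquistVec c z N) (takenakaMalmquistVec c z M) = 0 := by
  obtain ⟨g, hg⟩ := exists_mulBlaschkeProd_eq_of_lt c z h (unitSzegoKernel (z M))
  rw [takenakaMalmquistVec, takenakaMalmquistVec, hg, mulBlaschkeProd, LinearIsometry.coe_comp,
    Function.comp_apply, LinearIsometry.inner_map_map, inner_unitSzegoKernel,
    repFun_blaschkeFactor_shift]
  simp [mobius]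

lemma orthonormal_takenakaMalmquistVec : Orthonormal ℂ (takenakaMalmquistVec c z) := by
  refine ⟨fun N => ?_, fun N M hNM => ?_⟩
  · rw [takenakaMalmquistVec, LinearIsometry.norm_map, norm_unitSzegoKernel]
  · rcases hNM.lt_or_gt with h | h
    · exact inner_takenakaMalmquistVec_of_lt c z h
    · exact inner_eq_zero_symm.1 (inner_takenakaMalmquistVec_of_lt c z h)

variable {c z}

lemma exists_mulBlaschkeProd_eq_of_forall_inner_eq_zero {f : H2}
    (hf : ∀ N, inner ℂ (takenakaMalmquistVec c z N) f = 0) (N : ℕ) :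
    ∃ g, mulBlaschkeProd c z N g = f := by
  induction N with
  | zero => exact ⟨f, rfl⟩
  | succ N ih =>
    obtain ⟨g, rfl⟩ := ih
    have eval_eq_zero : repFun 1 g (z N) = 0 := by
      simpa [takenakaMalmquistVec, inner_unitSzegoKernel, (one_sub_norm_sq_pos (z N)).ne',
        (Real.sqrt_pos.2 (one_sub_norm_sq_pos (z N))).ne'] using hf N
    obtain ⟨g', rfl⟩ := mem_range_blaschkeFactor_of_repFun_eq_zero (c N) eval_eq_zero
    exact ⟨g', rfl⟩

lemma eq_zero_of_forall_inner_takenakaMalmquistVec_eq_zero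
    (hcz : ∀ x : 𝔻, Tendsto (fun N => blaschkeProd c z N x) atTop (𝓝 0)) {f : H2}
    (hf : ∀ N, inner ℂ (takenakaMalmquistVec c z N) f = 0) : f = 0 := by
  refine IsDoublingWeight.one.eq_zero_of_forall_repFun_eq_zero fun x => ?_
  have norm_le (N : ℕ) :
      ‖repFun 1 f x‖ ≤ ‖blaschkeProd c z N x‖ * (‖szegoKernel x‖ * ‖f‖) := by
    obtain ⟨g, rfl⟩ := exists_mulBlaschkeProd_eq_of_forall_inner_eq_zero hf N
    rw [repFun_mulBlaschkeProd, norm_mul, LinearIsometry.norm_map]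
    gcongr
    exact norm_repFun_le g x
  have tendsto_zero := (hcz x).norm.mul_const (‖szegoKernel x‖ * ‖f‖)
  rw [norm_zero, zero_mul] at tendsto_zero
  exact norm_le_zero_iff.1 (ge_of_tendsto' tendsto_zero norm_le)

lemma exists_hilbertBasis_takenakaMalmquistVec
    (hcz : ∀ x : 𝔻, Tendsto (fun N => blaschkeProd c z N x) atTop (𝓝 0)) :
    ∃ b : HilbertBasis ℕ ℂ H2, ⇑b = takenakaMalmquistVec c z := by
  refine ⟨.mkOfOrthogonalEqBot (orthonormal_takenakaMalmquistVec c z) ?_,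
    HilbertBasis.coe_mkOfOrthogonalEqBot _ _⟩
  refine (Submodule.eq_bot_iff _).2 fun f hf =>
    eq_zero_of_forall_inner_takenakaMalmquistVec_eq_zero hcz fun N => ?_
  exact hf _ (Submodule.subset_span ⟨N, rfl⟩)

end TakenakaMalmquist

section TakenakaMalmquistBounds

open UnitDisc

lemma norm_sub_sq_eq_norm_one_sub_conj_mul_sq_sub (a x : ℂ) :
    ‖a - x‖ ^ 2 = ‖1 - star a * x‖ ^ 2 - (1 - ‖a‖ ^ 2) * (1 - ‖x‖ ^ 2) := by
  simp only [← Complex.normSq_eq_norm_sq, Complex.normSq_apply, RCLike.star_def, Complex.sub_re,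
    Complex.sub_im, Complex.mul_re, Complex.mul_im, Complex.conj_re, Complex.conj_im,
    Complex.one_re, Complex.one_im]
  ring

section Bounds

variable {r ρ : ℝ} {a x : ℂ}

lemma one_sub_mul_le_norm_one_sub_conj_mul (ha : ‖a‖ ≤ r) (hx : ‖x‖ ≤ ρ) :
    1 - r * ρ ≤ ‖1 - star a * x‖ :=
  calc 1 - r * ρ ≤ 1 - ‖a‖ * ‖x‖ := by
        gcongr
        exact (norm_nonneg a).trans ha
    _ = ‖(1 : ℂ)‖ - ‖star a * x‖ := by rw [norm_one, norm_mul, norm_star]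
    _ ≤ _ := norm_sub_norm_le _ _

lemma norm_mobius_le_div (hrρ : r * ρ < 1) (ha : ‖a‖ ≤ r) (hx : ‖x‖ ≤ ρ) :
    ‖mobius a x‖ ≤ (r + ρ) / (1 - r * ρ) := by
  have := sub_pos.2 hrρ
  rw [mobius, norm_div]
  gcongr
  · exact add_nonneg ((norm_nonneg a).trans ha) ((norm_nonneg x).trans hx)
  · exact (norm_sub_le a x).trans (add_le_add ha hx)
  · exact one_sub_mul_le_norm_one_sub_conj_mul ha hx

lemma exists_norm_mobius_le (hr₀ : 0 ≤ r) (hr₁ : r < 1) (hρ₀ : 0 ≤ ρ) (hρ₁ : ρ < 1) :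
    ∃ q, 0 < q ∧ q < 1 ∧ ∀ a x : ℂ, ‖a‖ ≤ r → ‖x‖ ≤ ρ → ‖mobius a x‖ ≤ q := by
  set η := (1 - r ^ 2) * (1 - ρ ^ 2) / 4 with hη
  have hr : 0 < 1 - r ^ 2 := sub_pos.2 (pow_lt_one₀ hr₀ hr₁ two_ne_zero)
  have hρ : 0 < 1 - ρ ^ 2 := sub_pos.2 (pow_lt_one₀ hρ₀ hρ₁ two_ne_zero)
  have η_pos : 0 < η := by positivity
  have η_lt_one : η < 1 := by nlinarith [sq_nonneg r, sq_nonneg ρ]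
  refine ⟨√(1 - η), Real.sqrt_pos.2 (sub_pos.2 η_lt_one),
    (Real.sqrt_lt' one_pos).2 (by linarith), fun a x ha hx => Real.le_sqrt_of_sq_le ?_⟩
  have denom_pos : 0 < ‖1 - star a * x‖ := (sub_pos.2 (mul_lt_one_of_nonneg_of_lt_one_left
    hr₀ hr₁ hρ₁.le)).trans_le (one_sub_mul_le_norm_one_sub_conj_mul ha hx)
  have denom_le : ‖1 - star a * x‖ ≤ 2 :=
    calc ‖1 - star a * x‖ ≤ ‖(1 : ℂ)‖ + ‖star a * x‖ := norm_sub_le _ _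
      _ ≤ 1 + 1 * 1 := by
        rw [norm_one, norm_mul, norm_star]
        gcongr <;> linarith
      _ = 2 := by norm_num
  rw [mobius, norm_div, div_pow]
  refine (div_le_iff₀ (pow_pos denom_pos 2)).2 ?_
  calc ‖a - x‖ ^ 2 = ‖1 - star a * x‖ ^ 2 - (1 - ‖a‖ ^ 2) * (1 - ‖x‖ ^ 2) :=
        norm_sub_sq_eq_norm_one_sub_conj_mul_sq_sub a x
    _ ≤ ‖1 - star a * x‖ ^ 2 - (1 - r ^ 2) * (1 - ρ ^ 2) := by
        gcongr
        exact sub_nonneg.2 (pow_le_one₀ (norm_nonneg a) (ha.trans hr₁.le))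
    _ = ‖1 - star a * x‖ ^ 2 - η * 2 ^ 2 := by rw [hη]; ring
    _ ≤ ‖1 - star a * x‖ ^ 2 - η * ‖1 - star a * x‖ ^ 2 := by gcongr
    _ = _ := by ring

end Bounds

variable {c : ℕ → Circle} {z : ℕ → 𝔻} {r ρ q : ℝ}

lemma norm_blaschkeProd_le {x : ℂ} (hq : ∀ k, ‖mobius (z k) x‖ ≤ q) (N : ℕ) :
    ‖blaschkeProd c z N x‖ ≤ q ^ N := by
  rw [blaschkeProd, norm_prod]
  calc ∏ k ∈ Finset.range N, ‖(c k : ℂ) * mobius (z k) x‖ ≤ ∏ _k ∈ Finset.range N, q := by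
        gcongr with k
        rw [norm_mul, Circle.norm_coe, one_mul]
        exact hq k
    _ = q ^ N := by rw [Finset.prod_const, Finset.card_range]

lemma tendsto_blaschkeProd_zero (hr : r < 1) (hz : ∀ k, ‖(z k : ℂ)‖ ≤ r) (x : 𝔻) :
    Tendsto (fun N => blaschkeProd c z N x) atTop (𝓝 0) := by
  obtain ⟨q, hq₀, hq₁, hq⟩ :=
    exists_norm_mobius_le ((norm_nonneg _).trans (hz 0)) hr (norm_nonneg (x : ℂ)) x.norm_lt_one
  exact squeeze_zero_norm (norm_blaschkeProd_le fun k => hq _ _ (hz k) le_rfl)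
    (tendsto_pow_atTop_nhds_zero_of_lt_one hq₀.le hq₁)

lemma differentiableOn_takenakaMalmquistFun (hz : ∀ k, ‖(z k : ℂ)‖ ≤ r) (hrρ : r * ρ < 1) (N : ℕ) :
    DifferentiableOn ℂ (takenakaMalmquistFun c z N) (Metric.closedBall 0 ρ) := by
  have denom_ne_zero (k : ℕ) (x : ℂ) (hx : x ∈ Metric.closedBall 0 ρ) :
      1 - star (z k : ℂ) * x ≠ 0 :=
    norm_pos_iff.1 ((sub_pos.2 hrρ).trans_le
      (one_sub_mul_le_norm_one_sub_conj_mul (hz k) (mem_closedBall_zero_iff.1 hx)))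
  refine .mul (.fun_finsetProd fun k _ => .const_mul ?_ _) ?_
  · exact .div (by fun_prop) (by fun_prop) (denom_ne_zero k)
  · exact .div (by fun_prop) (by fun_prop) (denom_ne_zero N)

lemma norm_takenakaMalmquistVec_apply_le (hz : ∀ k, ‖(z k : ℂ)‖ ≤ r) (hρ : 0 < ρ) (hrρ : r * ρ < 1)
    (hq : ∀ k x, ‖x‖ ≤ ρ → ‖mobius (z k) x‖ ≤ q) (N j : ℕ) :
    ‖takenakaMalmquistVec c z N j‖ ≤ (1 - r * ρ)⁻¹ * (q ^ N * ρ⁻¹ ^ j) := by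
  have norm_fun_le (x : ℂ) (hx : x ∈ Metric.sphere 0 ρ) :
      ‖takenakaMalmquistFun c z N x‖ ≤ q ^ N * (1 / (1 - r * ρ)) := by
    have hxρ := (mem_sphere_zero_iff_norm.1 hx).le
    have sqrt_le : √(1 - ‖(z N : ℂ)‖ ^ 2) ≤ 1 := Real.sqrt_le_one.2 (by simp)
    rw [takenakaMalmquistFun, norm_mul, norm_div, Complex.norm_real,
      Real.norm_of_nonneg (Real.sqrt_nonneg _)]
    have := sub_pos.2 hrρ
    gcongr
    · exact pow_nonneg ((norm_nonneg _).trans (hq 0 x hxρ)) N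
    · exact norm_blaschkeProd_le (fun k => hq k x hxρ) N
    · exact one_sub_mul_le_norm_one_sub_conj_mul (hz N) hxρ
  have coeff_le := IsDoublingWeight.one.norm_coeff_div_le (repFun_takenakaMalmquistVec c z N) hρ
    ((differentiableOn_takenakaMalmquistFun hz hrρ N).diffContOnCl_ball subset_rfl) norm_fun_le j
  calc ‖takenakaMalmquistVec c z N j‖ ≤ q ^ N * (1 / (1 - r * ρ)) / ρ ^ j := by simpa using coeff_le
    _ = _ := by rw [inv_pow]; ring

lemma isConeLocalized_synthesis_takenakaMalmquistVec (hr : r < 1) (hz : ∀ k, ‖(z k : ℂ)‖ ≤ r) :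
    IsConeLocalized (synthesis (orthonormal_takenakaMalmquistVec c z)).toContinuousLinearMap := by
  have hr₀ : 0 ≤ r := (norm_nonneg _).trans (hz 0)
  obtain ⟨q, hq₀, hq₁, hq⟩ := exists_norm_mobius_le hr₀ hr (ρ := 1 / 2) (by norm_num) (by norm_num)
  obtain ⟨R, hR₁, hR⟩ : ∃ R, 1 < R ∧ r * R < 1 := by
    refine ⟨2 / (1 + r), (one_lt_div (by linarith)).2 (by linarith), ?_⟩
    rw [← mul_div_assoc, div_lt_one (by linarith)]
    linarith
  have hr_half : r * (1 / 2) < 1 := by linarith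
  set Q := (r + R) / (1 - r * R)
  have : 0 < Q := div_pos (by linarith) (sub_pos.2 hR)
  have inside := norm_takenakaMalmquistVec_apply_le (c := c) hz one_half_pos hr_half
    fun k x => hq _ x (hz k)
  have outside := norm_takenakaMalmquistVec_apply_le (c := c) hz (one_pos.trans hR₁) hR
    fun k x hx => norm_mobius_le_div hR (hz k) hx
  have : 0 ≤ (1 - r * (1 / 2))⁻¹ := inv_nonneg.2 (sub_nonneg.2 hr_half.le)
  have : 0 ≤ (1 - r * R)⁻¹ := inv_nonneg.2 (sub_nonneg.2 hR.le)
  refine ⟨max (1 - r * (1 / 2))⁻¹ (1 - r * R)⁻¹, max 2 Q, max q R⁻¹, by positivity, by positivity,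
    max_lt hq₁ (inv_lt_one_of_one_lt₀ hR₁), fun j N => ?_⟩
  rw [matrixEntry_synthesis]
  constructor
  · refine (outside N j).trans ?_
    gcongr <;> exact le_max_right _ _
  · refine (inside N j).trans ?_
    rw [mul_comm (q ^ N), one_div, inv_inv]
    gcongr <;> exact le_max_left _ _

lemma isConeLocalized_shift : IsConeLocalized shift.toContinuousLinearMap := by
  refine ⟨2, 2, 1 / 2, by norm_num, by norm_num, by norm_num, fun j n => ?_⟩
  rw [shift, matrixEntry_synthesis, Function.comp_apply, lp.single_apply, Pi.single_apply]
  split_ifs with h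
  · have pow_mul_pow : (2 : ℝ) ^ n * (1 / 2) ^ n = 1 := by rw [← mul_pow]; norm_num
    rw [h, norm_one]
    constructor
    · rw [pow_succ, ← mul_assoc (2 ^ n), pow_mul_pow]
      norm_num
    · rw [pow_succ, mul_right_comm, pow_mul_pow]
      norm_num
  · rw [norm_zero]
    constructor <;> positivity

end TakenakaMalmquistBounds

section CuntzFamily

open scoped lp

variable {𝕜 τ ι κ E F : Type*} [RCLike 𝕜]

section NormedSpace

variable [Fintype τ] [NormedAddCommGroup E] [NormedSpace 𝕜 E] [NormedAddCommGroup F]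
  [NormedSpace 𝕜 F] {X : τ → F →L[𝕜] E} {Y : τ → E →L[𝕜] F}

lemma apply_sum_apply_of_comp_eq (h_self : ∀ i, Y i ∘L X i = 1)
    (h_ne : ∀ i k, i ≠ k → Y i ∘L X k = 0) (i : τ) (v : τ → F) : Y i (∑ k, X k (v k)) = v i := by
  rw [map_sum]
  exact (Finset.sum_eq_single i (fun k _ hk => congrArg (· (v k)) (h_ne i k hk.symm))
    (by simp)).trans (congrArg (· (v i)) (h_self i))

/-- Operators `X i : F → E` and `Y i : E → F` satisfying the Cuntz relations, with `Y i` in the role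
of the adjoint of `X i`: the row `X` and the column `Y` are inverse to each other. -/
structure IsCuntzFamily (X : τ → F →L[𝕜] E) (Y : τ → E →L[𝕜] F) : Prop where
  comp_self : ∀ i, Y i ∘L X i = 1
  comp_of_ne : ∀ i k, i ≠ k → Y i ∘L X k = 0
  sum_comp : ∑ i, X i ∘L Y i = 1

namespace IsCuntzFamily

lemma sum_apply (h : IsCuntzFamily X Y) (x : E) : ∑ i, X i (Y i x) = x := by
  simpa using congrArg (· x) h.sum_comp

lemma apply_sum (h : IsCuntzFamily X Y) (i : τ) (v : τ → F) : Y i (∑ k, X k (v k)) = v i :=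
  apply_sum_apply_of_comp_eq h.comp_self h.comp_of_ne i v

/-- The isomorphism from a direct sum of copies of `F` to `E` given by the row of a Cuntz family. -/
def equiv (h : IsCuntzFamily X Y) : PiLp 2 (fun _ : τ => F) ≃L[𝕜] E :=
  .equivOfInverse (∑ i, X i ∘L PiLp.proj 2 (fun _ : τ => F) i)
    ((PiLp.continuousLinearEquiv 2 𝕜 fun _ : τ => F).symm ∘L .pi Y)
    (fun v => by
      ext i
      simpa using h.apply_sum i v)
    (fun x => by simpa using h.sum_apply x)

lemma equiv_apply (h : IsCuntzFamily X Y) (v : PiLp 2 (fun _ : τ => F)) :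
    h.equiv v = ∑ i, X i (v i) := by
  simp [equiv]

lemma sum_comp_comp_equiv (h : IsCuntzFamily X Y) (S : F →L[𝕜] F) (v : PiLp 2 (fun _ : τ => F)) :
    (∑ i, X i ∘L S ∘L Y i) (h.equiv v) = h.equiv (WithLp.toLp 2 fun i => S (v i)) := by
  simp [equiv_apply, h.apply_sum, -map_sum]

end IsCuntzFamily

end NormedSpace

lemma IsCuntzFamily.of_isDiagConj [Fintype τ] [DecidableEq ι] {d : ι → 𝕜}
    {X X' Y Y' : τ → ℓ²(ι, 𝕜) →L[𝕜] ℓ²(ι, 𝕜)} (h : IsCuntzFamily X Y) (hd : ∀ j, d j ≠ 0)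
    (hX : ∀ i, IsDiagConj d (X i) (X' i)) (hY : ∀ i, IsDiagConj d (Y i) (Y' i)) :
    IsCuntzFamily X' Y' where
  comp_self i := IsDiagConj.unique hd ((hY i).comp (hX i)) (by rw [h.comp_self i]; exact .one)
  comp_of_ne i k hik := IsDiagConj.unique hd ((hY i).comp (hX k))
    (by rw [h.comp_of_ne i k hik]; exact .zero)
  sum_comp := IsDiagConj.unique hd (.sum fun i _ => (hX i).comp (hY i))
    (by rw [h.sum_comp]; exact .one)

section HilbertBasis

variable [NormedAddCommGroup E] [InnerProductSpace 𝕜 E] [CompleteSpace E]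

/-- The isometry sending the standard basis to the part of a Hilbert basis indexed by `κ × {i}`. -/
def basisColumn (b : HilbertBasis ι 𝕜 E) (e : κ × τ ≃ ι) (i : τ) : ℓ²(κ, 𝕜) →ₗᵢ[𝕜] E :=
  synthesis (b.orthonormal.comp (fun n => e (n, i)) fun _ _ h => by simpa using e.injective h)

variable (b : HilbertBasis ι 𝕜 E) (e : κ × τ ≃ ι)

lemma adjoint_basisColumn_comp_self (i : τ) :
    ContinuousLinearMap.adjoint (basisColumn b e i).toContinuousLinearMap ∘L
      (basisColumn b e i).toContinuousLinearMap = 1 :=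
  (ContinuousLinearMap.norm_map_iff_adjoint_comp_self _).1 (basisColumn b e i).norm_map

lemma basisColumn_single [DecidableEq κ] (i : τ) (n : κ) :
    basisColumn b e i (lp.single 2 n 1) = b (e (n, i)) :=
  synthesis_single _ n

lemma adjoint_basisColumn_apply (i : τ) (f : E) (n : κ) :
    ContinuousLinearMap.adjoint (basisColumn b e i).toContinuousLinearMap f n =
      inner 𝕜 (b (e (n, i))) f := by
  classical
  rw [← inner_single_one_left, ContinuousLinearMap.adjoint_inner_right,
    LinearIsometry.coe_toContinuousLinearMap, basisColumn_single]

lemma adjoint_basisColumn_comp_of_ne (i k : τ) (hik : i ≠ k) :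
    ContinuousLinearMap.adjoint (basisColumn b e i).toContinuousLinearMap ∘L
      (basisColumn b e k).toContinuousLinearMap = 0 := by
  classical
  refine clm_ext_single fun n => ?_
  ext j
  rw [ContinuousLinearMap.comp_apply, adjoint_basisColumn_apply,
    LinearIsometry.coe_toContinuousLinearMap, basisColumn_single]
  exact b.orthonormal.2 (by simp [hik])

lemma isCuntzFamily_basisColumn [Fintype τ] :
    IsCuntzFamily (fun i => (basisColumn b e i).toContinuousLinearMap)
      fun i => ContinuousLinearMap.adjoint (basisColumn b e i).toContinuousLinearMap := by
  refine ⟨adjoint_basisColumn_comp_self b e, adjoint_basisColumn_comp_of_ne b e, ?_⟩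
  ext f
  refine b.repr.injective (lp.ext (funext fun k => ?_))
  obtain ⟨⟨n, i⟩, rfl⟩ := e.surjective k
  rw [b.repr_apply_apply, b.repr_apply_apply, ← adjoint_basisColumn_apply,
    ← adjoint_basisColumn_apply]
  simpa using congrArg (· n) (apply_sum_apply_of_comp_eq (adjoint_basisColumn_comp_self b e)
    (adjoint_basisColumn_comp_of_ne b e) i _)

end HilbertBasis

end CuntzFamily

section Blaschke

open UnitDisc

variable {c : ℕ → Circle} {z : ℕ → 𝔻} {m : ℕ} {B : ℂ → ℂ}

lemma blaschkeProd_mul_add_of_periodic (hc : Function.Periodic c m) (hz : Function.Periodic z m)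
    (n i : ℕ) (x : ℂ) :
    blaschkeProd c z (n * m + i) x = blaschkeProd c z m x ^ n * blaschkeProd c z i x := by
  induction n with
  | zero => simp
  | succ n ih =>
    rw [show (n + 1) * m + i = m + (n * m + i) by ring, pow_succ', mul_assoc, ← ih, blaschkeProd,
      Finset.prod_range_add]
    simp only [add_comm m _, hc _, hz _]
    rfl

lemma takenakaMalmquistFun_mul_add_of_periodic (hc : Function.Periodic c m)
    (hz : Function.Periodic z m) (n i : ℕ) (x : ℂ) :
    takenakaMalmquistFun c z (n * m + i) x =
      blaschkeProd c z m x ^ n * takenakaMalmquistFun c z i x := by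
  have zero_eq : z (n * m + i) = z i := by simpa [add_comm] using hz.nat_mul n i
  rw [takenakaMalmquistFun, takenakaMalmquistFun, zero_eq, blaschkeProd_mul_add_of_periodic hc hz,
    mul_assoc]

lemma exists_norm_le_of_periodic (hm : 0 < m) (hz : Function.Periodic z m) :
    ∃ r < 1, ∀ k, ‖(z k : ℂ)‖ ≤ r := by
  obtain ⟨k₀, -, hk₀⟩ := (Finset.range m).exists_max_image (fun k => ‖(z k : ℂ)‖)
    ⟨0, Finset.mem_range.2 hm⟩
  refine ⟨_, (z k₀).norm_lt_one, fun k => ?_⟩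
  rw [← hz.map_mod_nat k]
  exact hk₀ _ (Finset.mem_range.2 (Nat.mod_lt k hm))

lemma IsBlaschke.exists_periodic (hB : IsBlaschke m B) (hm : 0 < m) :
    ∃ (c : ℕ → Circle) (z : ℕ → 𝔻), Function.Periodic c m ∧ Function.Periodic z m ∧
      blaschkeProd c z m = B := by
  obtain ⟨θ, zs, hzs, hB⟩ := hB
  refine ⟨fun k => if k % m = 0 then Circle.exp θ else 1,
    fun k => .mk (zs ⟨k % m, Nat.mod_lt k hm⟩) (mem_ball_zero_iff.1 (hzs _)),
    fun k => by simp, fun k => by simp, funext fun x => ?_⟩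
  have prod_const : ∏ k ∈ Finset.range m, ((if k % m = 0 then Circle.exp θ else 1 : Circle) : ℂ) =
      Complex.exp (θ * Complex.I) := by
    rw [Finset.prod_eq_single_of_mem 0 (Finset.mem_range.2 hm)]
    · simp
    · intro k hk hk₀
      simp [Nat.mod_eq_of_lt (Finset.mem_range.1 hk), hk₀]
  rw [hB, blaschkeProd, Finset.prod_mul_distrib, prod_const, Finset.prod_range]
  simp [Nat.mod_eq_of_lt]

lemma IsBlaschke.exists_isCuntzFamily (hB : IsBlaschke m B) (hm : 0 < m) :
    ∃ A : Fin m → H2 →L[ℂ] H2, (∀ i, IsConeLocalized (A i)) ∧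
      IsCuntzFamily A (fun i => ContinuousLinearMap.adjoint (A i)) ∧
      ∀ i n (x : 𝔻), repFun 1 (A i (lp.single 2 n 1)) x =
        B x ^ n * repFun 1 (A i (lp.single 2 0 1)) x := by
  obtain ⟨c, z, hc, hz, rfl⟩ := hB.exists_periodic hm
  obtain ⟨r, hr, hzr⟩ := exists_norm_le_of_periodic hm hz
  obtain ⟨b, hb⟩ :=
    exists_hilbertBasis_takenakaMalmquistVec (c := c) (tendsto_blaschkeProd_zero hr hzr)
  have : NeZero m := ⟨hm.ne'⟩
  let e : ℕ × Fin m ≃ ℕ := (Nat.divModEquiv m).symm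
  have column_single (i : Fin m) (n : ℕ) :
      basisColumn b e i (lp.single 2 n 1) = takenakaMalmquistVec c z (n * m + i) := by
    rw [basisColumn_single, hb]
    rfl
  have synthesis_cone := isConeLocalized_synthesis_takenakaMalmquistVec (c := c) hr hzr
  refine ⟨_, fun i => synthesis_cone.of_matrixEntry_eq hm (i := i) fun j n => ?_,
    isCuntzFamily_basisColumn b e, fun i n x => ?_⟩
  · rw [matrixEntry_synthesis]
    exact congrArg (· j) (column_single i n)
  · simp only [LinearIsometry.coe_toContinuousLinearMap, column_single, repFun_takenakaMalmquistVec,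
      takenakaMalmquistFun_mul_add_of_periodic hc hz, pow_zero, one_mul]

end Blaschke

section Similarity

open UnitDisc

variable {β : ℕ → ℝ} {S S' T T' : H2 →L[ℂ] H2}

lemma IsDiagConj.repFun_single (hβ : IsDoublingWeight β)
    (hT : IsDiagConj (fun n => (β n : ℂ)) T T') (n : ℕ) (x : ℂ) :
    repFun β (T' (lp.single 2 n 1)) x = repFun 1 (T (lp.single 2 n 1)) x / β n := by
  have hβ₀ (n : ℕ) : (β n : ℂ) ≠ 0 := Complex.ofReal_ne_zero.2 (hβ.pos n).ne'
  rw [repFun, repFun, ← tsum_div_const]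
  refine tsum_congr fun j => ?_
  have entry_eq : T' (lp.single 2 n 1) j * β n = β j * T (lp.single 2 n 1) j := hT j n
  rw [Pi.one_apply, Complex.ofReal_one, div_one, mul_div_right_comm,
    (div_eq_div_iff (hβ₀ j) (hβ₀ n)).2 (entry_eq.trans (mul_comm _ _))]

lemma IsDiagConj.repFun_eq_mul_of_forall_single (hβ : IsDoublingWeight β)
    (hS : IsDiagConj (fun n => (β n : ℂ)) S S') (hT : IsDiagConj (fun n => (β n : ℂ)) T T')
    {x : 𝔻} {t : ℂ}
    (h : ∀ n, repFun 1 (S (lp.single 2 n 1)) x = t * repFun 1 (T (lp.single 2 n 1)) x) (f : H2) :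
    repFun β (S' f) x = t * repFun β (T' f) x := by
  have eval_eq : hβ.evalCLM x ∘L S' = t • hβ.evalCLM x ∘L T' := clm_ext_single fun n => by
    simp only [ContinuousLinearMap.comp_apply, smul_apply, smul_eq_mul,
      hβ.evalCLM_apply, hS.repFun_single hβ, hT.repFun_single hβ, h, mul_div_assoc]
  simpa [hβ.evalCLM_apply] using congrArg (· f) eval_eq

lemma IsCuntzFamily.repMul_sum_comp_comp {τ : Type*} [Fintype τ] {X Y : τ → H2 →L[ℂ] H2}
    (hβ : IsDoublingWeight β) (hXY : IsCuntzFamily X Y) {B : ℂ → ℂ}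
    (h : ∀ i f (x : 𝔻), repFun β (X i (T f)) x = B x * repFun β (X i f) x) :
    RepMul β B (∑ i, X i ∘L T ∘L Y i) := by
  intro f x hx
  lift x to 𝔻 using mem_ball_zero_iff.1 hx
  simp only [← hβ.evalCLM_apply] at h ⊢
  calc _ = ∑ i, hβ.evalCLM x (X i (T (Y i f))) := by simp
    _ = B x * hβ.evalCLM x (∑ i, X i (Y i f)) := by simp only [h, map_sum, Finset.mul_sum]
    _ = _ := by rw [hXY.sum_apply]

theorem statement1_general {β : ℕ → ℝ} (hβ : IsDoublingWeight β) (m : ℕ) (hm : 0 < m) (B : ℂ → ℂ)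
    (hB : IsBlaschke m B) :
    ∃ TB Tz : H2 →L[ℂ] H2,
      RepMul β B TB ∧ RepMul β (fun z => z) Tz ∧
        ∃ X : Hm m ≃L[ℂ] H2, ∀ v : Hm m, TB (X v) = X (WithLp.toLp 2 (fun i => Tz (v i))) := by
  obtain ⟨A, hA, isCuntzFamily_A, eval_A⟩ := hB.exists_isCuntzFamily hm
  choose X hX using fun i => (hA i).exists_isDiagConj hβ
  choose Y hY using fun i => (hA i).adjoint.exists_isDiagConj hβ
  obtain ⟨Tz, hTz⟩ := isConeLocalized_shift.exists_isDiagConj hβ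
  have isCuntzFamily_X : IsCuntzFamily X Y :=
    isCuntzFamily_A.of_isDiagConj (fun n => Complex.ofReal_ne_zero.2 (hβ.pos n).ne') hX hY
  have eval_X (i : Fin m) (f : H2) (x : 𝔻) :
      repFun β (X i (Tz f)) x = B x * repFun β (X i f) x :=
    ((hX i).comp hTz).repFun_eq_mul_of_forall_single hβ (hX i) (fun n => by
      simp only [ContinuousLinearMap.comp_apply, LinearIsometry.coe_toContinuousLinearMap,
        shift_single, eval_A i (n + 1), eval_A i n, pow_succ', mul_assoc]) f
  have repMul_Tz : RepMul β (fun z => z) Tz := fun f x hx => by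
    lift x to 𝔻 using mem_ball_zero_iff.1 hx
    exact hTz.repFun_eq_mul_of_forall_single hβ .one (fun n => repFun_shift _ x) f
  exact ⟨∑ i, X i ∘L Tz ∘L Y i, Tz, isCuntzFamily_X.repMul_sum_comp_comp hβ eval_X, repMul_Tz,
    isCuntzFamily_X.equiv, isCuntzFamily_X.sum_comp_comp_equiv Tz⟩

end Similarity

/-- On a weighted Hardy space `H²_β` of polynomial growth, for any
finite Blaschke product `B` of order `m`, `M_B` is similar to the direct sum of `m`
copies of `M_z`. -/
theorem statement1 (w : ℕ → ℝ) (hw : PolyGrowth w) (m : ℕ) (hm : 0 < m)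
    (B : ℂ → ℂ) (hB : IsBlaschke m B) :
    ∃ TB Tz : H2 →L[ℂ] H2,
      RepMul (betaSeq w) B TB ∧ RepMul (betaSeq w) (fun z => z) Tz ∧
        ∃ X : Hm m ≃L[ℂ] H2, ∀ v : Hm m, TB (X v) = X (WithLp.toLp 2 (fun i => Tz (v i))) :=
  statement1_general hw.isDoublingWeight m hm B hB
end
end
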